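/- arXiv:2101.11094 — 2 statements merged into one kernel-verified Lean document; each statement's English description precedes it below -/
import Mathlib

section
/- Let M, N be positive integers, let φ : [0,∞) → (0,1] be non-increasing, and let L ∈ ℝ^{M×N} be φ-multiplicatively badly approximable, with each row's entries together with 1 linearly independent over ℚ. Then there exists a constant c₀ > 0 depending only on M and N such that for all Q = (Q_1,…,Q_N) ∈ [1,∞)^N with Q := (Q_1⋯Q_N)^{1/N} ≥ 2 one has S_L(Q) ≤ c₀ [ Q^N (log(Q/φ(Q)))^M + (Q^N/φ(Q)) (log(Q/φ(Q)))^{M−1} ]. -/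
/-- Distance from a real number to the nearest integer. -/
noncomputable def distNearestInt (x : ℝ) : ℝ := |x - round x|

/-- The geometric mean `(Q₁ ⋯ Q_N)^(1/N)`. -/
noncomputable def geomMean (N : ℕ) (Q : Fin N → ℝ) : ℝ := (∏ j, Q j) ^ ((1 : ℝ) / (N : ℝ))

/-- `L` is `φ`-multiplicatively badly approximable. -/
def multBadlyApprox (M N : ℕ) (φ : ℝ → ℝ) (L : Matrix (Fin M) (Fin N) ℝ) : Prop :=
  ∀ q : Fin N → ℤ, q ≠ 0 →
    φ ((∏ j, max 1 |(q j : ℝ)|) ^ ((1 : ℝ) / (N : ℝ))) ≤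
      (∏ j, max 1 |(q j : ℝ)|) * ∏ i, distNearestInt (∑ j, L i j * (q j : ℝ))

/-- The entries of each row of `L`, together with `1`, are linearly independent over `ℚ`. -/
def rowUnitIndep (M N : ℕ) (L : Matrix (Fin M) (Fin N) ℝ) : Prop :=
  ∀ i, LinearIndependent ℚ (Fin.cons (1 : ℝ) (fun j => L i j) : Fin (N + 1) → ℝ)

/-- The sum `S_L(Q)` of reciprocals of fractional parts over the aligned box `∏ [-Q_j, Q_j]`. -/
noncomputable def SLQ (M N : ℕ) (L : Matrix (Fin M) (Fin N) ℝ) (Q : Fin N → ℝ) : ℝ :=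
  ∑ q ∈ (Fintype.piFinset fun j => Finset.Icc ⌈-Q j⌉ ⌊Q j⌋).erase 0,
    ∏ i, (distNearestInt (∑ j, L i j * (q j : ℝ)))⁻¹

/-!
Write `d = M + N`. Integer points `z = (q, p)` with `|q_j| ≤ Q_j` and `|L_i q - p_i| ≤ δ_i` become,
after rescaling the box to the unit cube, points of a lattice of covolume `(∏ Q_j ∏ δ_i)⁻¹`. If they
span, translates of a fundamental domain show that there are at most a constant times
`V = ∏ Q_j ∏ δ_i` of them. If not, they lie in a hyperplane, and packing bounds their number by a
constant times `t ^ (1 - d)`, where `t` is the smallest distance between two of them. Applying this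
with the coordinates `j` for which `Q_j < 1 / t` frozen sharpens the second bound to
`t ^ (1 - M) * ∏ min(Q_j, 1 / t)`. A pair realising `t` differs by a point of the box scaled by `t`,
so bad approximability with lower bound `c` gives `t ^ (-M) * ∏ min(Q_j, 1 / t) ≤ V / c`,
and the count is `O(1 + V + (V / c) ^ (1 - 1 / d))`.

Group the `q` in the sum by the dyadic sizes `2 ^ (-k_i)` of `‖L_i q‖`. A level `s = ∑ k_i` consists
of `O((s + 1) ^ (M - 1))` groups, and each contributes
`O(2 ^ s + ∏ Q_j + (2 ^ s) ^ (1 / d) * (∏ Q_j / c) ^ (1 - 1 / d))`. The levels that occur satisfy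
`2 ^ s ≤ ∏ Q_j / c`, so summing over `s` costs one further logarithm for the middle term only: the
other two are geometric in `s`. This is why `∏ Q_j / c` carries one logarithm fewer.
-/

section Packing

open MeasureTheory Metric Module

variable {E : Type*} [NormedAddCommGroup E] [NormedSpace ℝ E] {S : Finset E} {R t : ℝ}

theorem card_le_pow_finrank_of_pairwise_le_norm_sub [FiniteDimensional ℝ E] (hR : 0 ≤ R)
    (ht : 0 < t) (hS : ∀ x ∈ S, ‖x‖ ≤ R) (hsep : (S : Set E).Pairwise fun x y => t ≤ ‖x - y‖) :
    (S.card : ℝ) ≤ (1 + 2 * R / t) ^ finrank ℝ E := by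
  borelize E
  let μ : Measure E := Measure.addHaar
  have hdisj : (S : Set E).Pairwise (Function.onFun Disjoint fun x => ball x (t / 2)) := by
    intro x hx y hy hxy
    apply ball_disjoint_ball
    rw [add_halves, dist_eq_norm]
    exact hsep hx hy hxy
  have hsub : ⋃ x ∈ S, ball x (t / 2) ⊆ ball 0 (R + t / 2) := by
    refine Set.iUnion₂_subset fun x hx => ball_subset_ball' ?_
    rw [dist_zero_right]
    linarith [hS x hx]
  have hvol : (S.card : ENNReal) * ENNReal.ofReal ((t / 2) ^ finrank ℝ E) * μ (ball 0 1) ≤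
      ENNReal.ofReal ((R + t / 2) ^ finrank ℝ E) * μ (ball 0 1) := by
    calc (S.card : ENNReal) * ENNReal.ofReal ((t / 2) ^ finrank ℝ E) * μ (ball 0 1)
        = ∑ x ∈ S, μ (ball x (t / 2)) := by
          simp only [μ.addHaar_ball_of_pos _ (half_pos ht), Finset.sum_const, nsmul_eq_mul,
            mul_assoc]
      _ = μ (⋃ x ∈ S, ball x (t / 2)) :=
          (measure_biUnion_finset hdisj fun _ _ => measurableSet_ball).symm
      _ ≤ μ (ball 0 (R + t / 2)) := measure_mono hsub
      _ = _ := μ.addHaar_ball_of_pos _ (by positivity)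
  have hcard : (S.card : ℝ) * (t / 2) ^ finrank ℝ E ≤ (R + t / 2) ^ finrank ℝ E := by
    have := (ENNReal.mul_le_mul_iff_left (measure_ball_pos μ _ zero_lt_one).ne'
      measure_ball_lt_top.ne).1 hvol
    rw [← ENNReal.ofReal_natCast, ← ENNReal.ofReal_mul (Nat.cast_nonneg _)] at this
    exact (ENNReal.ofReal_le_ofReal_iff (by positivity)).1 this
  calc (S.card : ℝ) ≤ (R + t / 2) ^ finrank ℝ E / (t / 2) ^ finrank ℝ E :=
        (le_div_iff₀ (by positivity)).2 hcard
    _ = (1 + 2 * R / t) ^ finrank ℝ E := by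
        rw [← div_pow]; congr 1; field_simp; ring

theorem card_le_pow_finrank_span_of_pairwise_le_norm_sub (hR : 0 ≤ R) (ht : 0 < t)
    (hS : ∀ x ∈ S, ‖x‖ ≤ R) (hsep : (S : Set E).Pairwise fun x y => t ≤ ‖x - y‖) :
    (S.card : ℝ) ≤ (1 + 2 * R / t) ^ finrank ℝ (Submodule.span ℝ (S : Set E)) := by
  classical
  set W := Submodule.span ℝ (S : Set E)
  have hcard : (S.subtype (· ∈ W)).card = S.card := by
    rw [Finset.card_subtype, Finset.filter_true_of_mem]
    exact fun x hx => Submodule.subset_span hx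
  rw [← hcard]
  refine card_le_pow_finrank_of_pairwise_le_norm_sub hR ht
    (fun x hx => hS x (Finset.mem_subtype.1 hx)) fun x hx y hy hxy => ?_
  exact hsep (Finset.mem_subtype.1 hx) (Finset.mem_subtype.1 hy) (Subtype.coe_ne_coe.2 hxy)

theorem card_le_of_span_ne_top [FiniteDimensional ℝ E] (hR : 0 ≤ R) (ht : 0 < t) (ht1 : t ≤ 1)
    (hS : ∀ x ∈ S, ‖x‖ ≤ R) (hsep : (S : Set E).Pairwise fun x y => t ≤ ‖x - y‖)
    (hspan : Submodule.span ℝ (S : Set E) ≠ ⊤) :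
    (S.card : ℝ) ≤ (1 + 2 * R) ^ finrank ℝ E * (t * t⁻¹ ^ finrank ℝ E) := by
  have hrank := Submodule.finrank_lt hspan
  obtain ⟨e, he⟩ := Nat.exists_eq_add_one_of_ne_zero hrank.ne_bot
  have hratio : 1 + 2 * R / t ≤ (1 + 2 * R) * t⁻¹ := by
    rw [add_mul, one_mul, ← div_eq_mul_inv]
    exact add_le_add_left ((one_le_inv₀ ht).2 ht1) _
  calc (S.card : ℝ) ≤ (1 + 2 * R / t) ^ finrank ℝ (Submodule.span ℝ (S : Set E)) :=
        card_le_pow_finrank_span_of_pairwise_le_norm_sub hR ht hS hsep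
    _ ≤ (1 + 2 * R / t) ^ e :=
        pow_le_pow_right₀ (le_add_of_nonneg_right (by positivity)) (by omega)
    _ ≤ ((1 + 2 * R) * t⁻¹) ^ e := by gcongr
    _ = (1 + 2 * R) ^ e * (t * t⁻¹ ^ finrank ℝ E) := by rw [he, mul_pow, pow_succ]; field_simp
    _ ≤ (1 + 2 * R) ^ finrank ℝ E * (t * t⁻¹ ^ finrank ℝ E) := by
        gcongr
        · linarith
        · omega

end Packing

section LatticeCounting

open MeasureTheory Metric Module

theorem natCast_mul_measure_le_of_isAddFundamentalDomain {G α : Type*} [AddGroup G] [Countable G]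
    [AddAction G α] [MeasurableSpace α] [MeasurableConstVAdd G α] {μ : Measure α}
    [VAddInvariantMeasure G α μ] {F T : Set α} (hF : IsAddFundamentalDomain G F μ)
    (hT : MeasurableSet T) {n : ℕ}
    (hn : ∀ y, ∃ s : Finset G, n ≤ s.card ∧ ∀ g ∈ s, g +ᵥ y ∈ T) :
    (n : ENNReal) * μ F ≤ μ T := by
  have hpoint : ∀ y, (n : ENNReal) ≤ ∑' g : G, T.indicator 1 (g +ᵥ y) := by
    intro y
    obtain ⟨s, hns, hs⟩ := hn y
    calc (n : ENNReal) ≤ s.card := mod_cast hns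
      _ = ∑ g ∈ s, T.indicator 1 (g +ᵥ y) := by
          rw [Finset.sum_congr rfl fun g hg => Set.indicator_of_mem (hs g hg) 1]; simp
      _ ≤ _ := ENNReal.sum_le_tsum s
  calc (n : ENNReal) * μ F = ∫⁻ _ in F, n ∂μ := (setLIntegral_const F _).symm
    _ ≤ ∫⁻ y in F, ∑' g : G, T.indicator 1 (g +ᵥ y) ∂μ := lintegral_mono hpoint
    _ = ∑' g : G, ∫⁻ y in F, T.indicator 1 (g +ᵥ y) ∂μ := lintegral_tsum fun g =>
        ((measurable_one.indicator hT).comp (measurable_const_vadd g)).aemeasurable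
    _ = ∫⁻ y, T.indicator 1 y ∂μ := (hF.lintegral_eq_tsum'' _).symm
    _ = μ T := lintegral_indicator_one hT

variable {E : Type*} [NormedAddCommGroup E] [NormedSpace ℝ E] [FiniteDimensional ℝ E] {R : ℝ}

theorem exists_mem_addSubgroup_norm_add_le {G : AddSubgroup E} {S : Set E} (hSG : S ⊆ G)
    (hS : ∀ x ∈ S, ‖x‖ ≤ R) (hspan : Submodule.span ℝ S = ⊤) (y : E) :
    ∃ v ∈ G, ‖v + y‖ ≤ finrank ℝ E * R := by
  let b := Basis.ofSpan hspan.ge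
  have hb : ∀ i, b i ∈ S := fun i => Basis.ofSpan_subset hspan.ge ⟨i, rfl⟩
  have := FiniteDimensional.fintypeBasisIndex b
  have hle : Submodule.span ℤ (Set.range b) ≤ G.toIntSubmodule :=
    Submodule.span_le.2 (Set.range_subset_iff.2 fun i => hSG (hb i))
  refine ⟨-ZSpan.floor b y, neg_mem (hle (ZSpan.floor b y).2), ?_⟩
  calc ‖-(ZSpan.floor b y : E) + y‖ = ‖ZSpan.fract b y‖ := by
        rw [ZSpan.fract_apply, neg_add_eq_sub]
    _ ≤ ∑ i, ‖b i‖ := ZSpan.norm_fract_le b y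
    _ ≤ ∑ _i, R := Finset.sum_le_sum fun i _ => hS _ (hb i)
    _ = finrank ℝ E * R := by
        rw [Finset.sum_const, nsmul_eq_mul, Finset.card_univ, ← finrank_eq_card_basis b]

theorem card_mul_measure_fundamentalDomain_le [MeasurableSpace E] [BorelSpace E] {μ : Measure E}
    [μ.IsAddHaarMeasure] {G : AddSubgroup E} [Countable G] {F : Set E}
    (hF : IsAddFundamentalDomain G F μ) {S : Finset E} (hSG : ∀ x ∈ S, x ∈ G)
    (hS : ∀ x ∈ S, ‖x‖ ≤ R) (hspan : Submodule.span ℝ (S : Set E) = ⊤) :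
    (S.card : ENNReal) * μ F ≤ μ (closedBall 0 ((finrank ℝ E + 1) * R)) := by
  refine natCast_mul_measure_le_of_isAddFundamentalDomain hF measurableSet_closedBall fun y => ?_
  obtain ⟨v, hvG, hv⟩ := exists_mem_addSubgroup_norm_add_le hSG hS hspan y
  let translate : S ↪ G :=
    ⟨fun x => ⟨x + v, add_mem (hSG x x.2) hvG⟩, fun x y h => by simpa using h⟩
  refine ⟨S.attach.map translate, by simp, ?_⟩
  intro g hg
  obtain ⟨x, -, rfl⟩ := Finset.mem_map.1 hg
  rw [mem_closedBall_zero_iff]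
  calc ‖(x : E) + v + y‖ ≤ ‖(x : E)‖ + ‖v + y‖ := by rw [add_assoc]; exact norm_add_le _ _
    _ ≤ R + finrank ℝ E * R := add_le_add (hS x x.2) hv
    _ = (finrank ℝ E + 1) * R := by ring

end LatticeCounting

section LinearForms

open MeasureTheory Metric Module Matrix

theorem card_le_of_span_int_basis {κ : Type*} [Fintype κ] [DecidableEq κ]
    (b : Basis κ ℝ (κ → ℝ)) {S : Finset (κ → ℝ)} {t : ℝ} (ht : 0 < t) (ht1 : t ≤ 1)
    (hSb : ∀ x ∈ S, x ∈ Submodule.span ℤ (Set.range b)) (hS : ∀ x ∈ S, ‖x‖ ≤ 2)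
    (hsep : (S : Set (κ → ℝ)).Pairwise fun x y => t ≤ ‖x - y‖) :
    (S.card : ℝ) ≤ (5 * (Fintype.card κ + 1)) ^ Fintype.card κ *
      (|(Matrix.of b).det|⁻¹ + t * t⁻¹ ^ Fintype.card κ) := by
  set d := Fintype.card κ
  have htd : 0 ≤ t * t⁻¹ ^ d := by positivity
  have hdet : 0 < |(Matrix.of b).det| := by
    rw [← ZSpan.volume_real_fundamentalDomain]
    exact ENNReal.toReal_pos (ZSpan.measure_fundamentalDomain_ne_zero b)
      (ZSpan.fundamentalDomain_isBounded b).measure_lt_top.ne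
  by_cases hspan : Submodule.span ℝ (S : Set (κ → ℝ)) = ⊤
  · let G := (Submodule.span ℤ (Set.range b)).toAddSubgroup
    have : Countable G := inferInstanceAs (Countable (Submodule.span ℤ (Set.range b)))
    have hvol := card_mul_measure_fundamentalDomain_le (G := G)
      (ZSpan.isAddFundamentalDomain' b volume) hSb hS hspan
    rw [ZSpan.volume_fundamentalDomain, Real.volume_pi_closedBall _ (by positivity),
      finrank_fintype_fun_eq_card, ← ENNReal.ofReal_natCast,
      ← ENNReal.ofReal_mul (Nat.cast_nonneg _), ENNReal.ofReal_le_ofReal_iff (by positivity),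
      ← le_div_iff₀ hdet, div_eq_mul_inv] at hvol
    calc (S.card : ℝ) ≤ (2 * ((d + 1) * 2)) ^ d * |(Matrix.of b).det|⁻¹ := hvol
      _ ≤ (5 * (d + 1)) ^ d * (|(Matrix.of b).det|⁻¹ + t * t⁻¹ ^ d) :=
          mul_le_mul (pow_le_pow_left₀ (by positivity)
            (by linarith [(d.cast_nonneg : (0 : ℝ) ≤ d)]) d)
            (le_add_of_nonneg_right htd) (by positivity) (by positivity)
  · have hpack := card_le_of_span_ne_top zero_le_two ht ht1 hS hsep hspan
    rw [finrank_fintype_fun_eq_card] at hpack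
    refine hpack.trans (mul_le_mul (pow_le_pow_left₀ (by norm_num) ?_ d)
      (le_add_of_nonneg_left (by positivity)) htd (by positivity))
    linarith [(d.cast_nonneg : (0 : ℝ) ≤ d)]

theorem card_le_of_mulVec {α κ : Type*} [Fintype κ] [DecidableEq κ] {A : Matrix κ κ ℝ}
    (hA : A.det ≠ 0) {S : Finset α} (f : α → κ → ℤ) {t : ℝ} (ht : 0 < t) (ht1 : t ≤ 1)
    (hS : ∀ x ∈ S, ‖A *ᵥ fun k => (f x k : ℝ)‖ ≤ 2)
    (hsep : (S : Set α).Pairwise fun x y =>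
      t ≤ ‖(A *ᵥ fun k => (f x k : ℝ)) - A *ᵥ fun k => (f y k : ℝ)‖) :
    (S.card : ℝ) ≤ (5 * (Fintype.card κ + 1)) ^ Fintype.card κ *
      (|A.det|⁻¹ + t * t⁻¹ ^ Fintype.card κ) := by
  classical
  let v : α → κ → ℝ := fun x => A *ᵥ fun k => (f x k : ℝ)
  have hinj : Set.InjOn v S := by
    intro x hx y hy hxy
    by_contra hne
    exact (hsep hx hy hne).not_gt (by rwa [show A *ᵥ _ = A *ᵥ _ from hxy, sub_self, norm_zero])
  have hAT : Aᵀ.det ≠ 0 := by rwa [det_transpose]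
  have hli : LinearIndependent ℝ Aᵀ.row := linearIndependent_rows_of_det_ne_zero hAT
  let b := basisOfPiSpaceOfLinearIndependent hli
  have hb : ⇑b = Aᵀ.row := coe_basisOfPiSpaceOfLinearIndependent hli
  have hmem : ∀ x, v x ∈ Submodule.span ℤ (Set.range b) := by
    intro x
    have hvx : v x = ∑ k, f x k • b k := by
      ext i
      simp [v, mulVec, dotProduct, hb, mul_comm]
    rw [hvx]
    exact sum_mem fun k _ => Submodule.smul_mem _ _ (Submodule.subset_span ⟨k, rfl⟩)
  have hsep_image : (S.image v : Set (κ → ℝ)).Pairwise fun x y => t ≤ ‖x - y‖ := by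
    rw [Finset.coe_image, hinj.pairwise_image]
    exact hsep
  have hcard := card_le_of_span_int_basis b ht ht1
    (Finset.forall_mem_image.2 fun x _ => hmem x) (Finset.forall_mem_image.2 hS) hsep_image
  rwa [Finset.card_image_of_injOn hinj, hb, show Matrix.of Aᵀ.row = Aᵀ from rfl,
    det_transpose] at hcard

variable {I J : Type*} [Fintype J]

/-- The numbers `q_j / Q_j` and `(L_i q - p_i) / δ_i` attached to the integer point `z = (q, p)`.
The integer points with `|q_j| ≤ Q_j` and `|L_i q - p_i| ≤ δ_i` are those for which this vector has
sup norm at most `1`. -/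
noncomputable def boxCoord (L : Matrix I J ℝ) (Q : J → ℝ) (δ : I → ℝ) (z : J ⊕ I → ℤ) :
    J ⊕ I → ℝ :=
  Sum.elim (fun j => z (.inl j) / Q j)
    (fun i => (∑ j, L i j * (z (.inl j) : ℝ) - z (.inr i)) / δ i)

variable (L : Matrix I J ℝ) {Q : J → ℝ} {δ : I → ℝ}

theorem boxCoord_sub (x y : J ⊕ I → ℤ) :
    boxCoord L Q δ (x - y) = boxCoord L Q δ x - boxCoord L Q δ y := by
  ext (j | i)
  · simp [boxCoord, sub_div]
  · simp only [boxCoord, Sum.elim_inr, Pi.sub_apply, Int.cast_sub, mul_sub, Finset.sum_sub_distrib]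
    ring

variable [Fintype I]

theorem norm_boxCoord_le_iff (hQ : ∀ j, 0 < Q j) (hδ : ∀ i, 0 < δ i) {t : ℝ} (ht : 0 ≤ t)
    {z : J ⊕ I → ℤ} :
    ‖boxCoord L Q δ z‖ ≤ t ↔ (∀ j, |(z (.inl j) : ℝ)| ≤ t * Q j) ∧
      ∀ i, |∑ j, L i j * (z (.inl j) : ℝ) - z (.inr i)| ≤ t * δ i := by
  simp only [pi_norm_le_iff_of_nonneg ht, Sum.forall, boxCoord, Sum.elim_inl, Sum.elim_inr,
    Real.norm_eq_abs, abs_div, abs_of_pos (hQ _), abs_of_pos (hδ _), div_le_iff₀ (hQ _),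
    div_le_iff₀ (hδ _)]

theorem card_le_of_norm_boxCoord (hQ : ∀ j, 0 < Q j) (hδ : ∀ i, 0 < δ i)
    {α : Type*} {S : Finset α} (f : α → J ⊕ I → ℤ) {t : ℝ} (ht : 0 < t) (ht1 : t ≤ 1)
    (hS : ∀ x ∈ S, ‖boxCoord L Q δ (f x)‖ ≤ 2)
    (hsep : (S : Set α).Pairwise fun x y => t ≤ ‖boxCoord L Q δ (f x - f y)‖) :
    (S.card : ℝ) ≤
      (5 * ((Fintype.card J + Fintype.card I : ℕ) + 1)) ^ (Fintype.card J + Fintype.card I) *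
      ((∏ j, Q j) * ∏ i, δ i + t * t⁻¹ ^ (Fintype.card J + Fintype.card I)) := by
  classical
  let A : Matrix (J ⊕ I) (J ⊕ I) ℝ :=
    fromBlocks (diagonal Q⁻¹) 0 (diagonal δ⁻¹ * L) (-diagonal δ⁻¹)
  have hmulVec : ∀ z : J ⊕ I → ℤ, A *ᵥ (fun k => (z k : ℝ)) = boxCoord L Q δ z := by
    intro z
    ext (j | i)
    · simp [A, boxCoord, mulVec, dotProduct, diagonal_apply, div_eq_inv_mul]
    · simp [A, boxCoord, mulVec, dotProduct, diagonal_apply, div_eq_inv_mul, mul_add,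
        Finset.mul_sum, mul_assoc, sub_eq_add_neg]
  have hdet : |A.det| = ((∏ j, Q j) * ∏ i, δ i)⁻¹ := by
    have hQ' : 0 < ∏ j, Q j := Finset.prod_pos fun j _ => hQ j
    have hneg : |∏ i, -(δ i)⁻¹| = (∏ i, δ i)⁻¹ := by
      rw [Finset.abs_prod, ← Finset.prod_inv_distrib]
      exact Finset.prod_congr rfl fun i _ => by rw [abs_neg, abs_of_pos (inv_pos.2 (hδ i))]
    simp [A, det_fromBlocks_zero₁₂, abs_mul, abs_of_pos hQ', hneg, mul_comm]
  have hA : A.det ≠ 0 := by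
    rw [← abs_pos, hdet]
    exact inv_pos.2 (mul_pos (Finset.prod_pos fun j _ => hQ j) (Finset.prod_pos fun i _ => hδ i))
  have := card_le_of_mulVec hA f ht ht1 (by simpa only [hmulVec] using hS)
    (by simpa only [hmulVec, ← boxCoord_sub] using hsep)
  rwa [hdet, inv_inv, Fintype.card_sum] at this

end LinearForms

section Slicing

variable {I J : Type*} [Fintype I] [Fintype J] {L : Matrix I J ℝ} {Q : J → ℝ} {δ : I → ℝ}
  {S : Finset (J ⊕ I → ℤ)} {t : ℝ}

theorem norm_boxCoord_submatrix (p : J → Prop) [DecidablePred p] {z : J ⊕ I → ℤ}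
    (hz : ∀ j, ¬p j → z (.inl j) = 0) :
    ‖boxCoord (L.submatrix id ((↑) : {j // p j} → J)) (fun j => Q j) δ
      (z ∘ Sum.map (↑) id)‖ = ‖boxCoord L Q δ z‖ := by
  have hcomp : boxCoord (L.submatrix id ((↑) : {j // p j} → J)) (fun j => Q j) δ
      (z ∘ Sum.map (↑) id) = boxCoord L Q δ z ∘ Sum.map (↑) id := by
    ext (j | i)
    · rfl
    · have hsum := Fintype.sum_subtype_add_sum_subtype p fun j => L i j * (z (.inl j) : ℝ)
      have hzero : ∑ j : {j // ¬p j}, L i j * (z (.inl j) : ℝ) = 0 :=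
        Finset.sum_eq_zero fun j _ => by rw [hz j j.2, Int.cast_zero, mul_zero]
      rw [hzero, add_zero] at hsum
      simp [boxCoord, hsum]
  rw [hcomp]
  refine le_antisymm ((pi_norm_le_iff_of_nonneg (norm_nonneg _)).2 fun k =>
      norm_le_pi_norm (boxCoord L Q δ z) (Sum.map Subtype.val id k))
    ((pi_norm_le_iff_of_nonneg (norm_nonneg _)).2 ?_)
  rintro (j | i)
  · by_cases hj : p j
    · exact norm_le_pi_norm (boxCoord L Q δ z ∘ Sum.map ((↑) : {j // p j} → J) id) (.inl ⟨j, hj⟩)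
    · simp [boxCoord, hz j hj]
  · exact norm_le_pi_norm (boxCoord L Q δ z ∘ Sum.map ((↑) : {j // p j} → J) id) (.inr i)

theorem monotone_five_mul_add_one_pow : Monotone fun d : ℕ => (5 * ((d : ℝ) + 1)) ^ d := by
  intro d e hde
  calc (5 * ((d : ℝ) + 1)) ^ d ≤ (5 * (e + 1)) ^ d := by gcongr
    _ ≤ (5 * (e + 1)) ^ e :=
        pow_le_pow_right₀ (by linarith [(e.cast_nonneg : (0 : ℝ) ≤ e)]) hde

theorem card_le_of_forall_eq_of_not (p : J → Prop) [DecidablePred p] (hQ : ∀ j, 0 < Q j)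
    (hδ : ∀ i, 0 < δ i) (ht : 0 < t) (ht1 : t ≤ 1) (hS : ∀ z ∈ S, ‖boxCoord L Q δ z‖ ≤ 1)
    (hsep : (S : Set (J ⊕ I → ℤ)).Pairwise fun x y => t ≤ ‖boxCoord L Q δ (x - y)‖)
    (hp : ∀ x ∈ S, ∀ y ∈ S, ∀ j, ¬p j → x (.inl j) = y (.inl j)) :
    (S.card : ℝ) ≤
      (5 * ((Fintype.card J + Fintype.card I : ℕ) + 1)) ^ (Fintype.card J + Fintype.card I) *
      ((∏ j : {j // p j}, Q j) * ∏ i, δ i +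
        t * t⁻¹ ^ (Fintype.card {j // p j} + Fintype.card I)) := by
  have hQ' : 0 ≤ ∏ j : {j // p j}, Q j := Finset.prod_nonneg fun j _ => (hQ j).le
  have hδ' : 0 ≤ ∏ i, δ i := Finset.prod_nonneg fun i _ => (hδ i).le
  obtain rfl | ⟨o, ho⟩ := S.eq_empty_or_nonempty
  · simp only [Finset.card_empty, Nat.cast_zero]
    positivity
  let L' := L.submatrix id ((↑) : {j // p j} → J)
  let restrict : (J ⊕ I → ℤ) → {j // p j} ⊕ I → ℤ := fun z => (z - o) ∘ Sum.map (↑) id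
  have hnorm : ∀ x ∈ S, ∀ y ∈ S,
      ‖boxCoord L' (fun j => Q j) δ ((x - y) ∘ Sum.map (↑) id)‖ = ‖boxCoord L Q δ (x - y)‖ :=
    fun x hx y hy => norm_boxCoord_submatrix p fun j hj => sub_eq_zero.2 (hp x hx y hy j hj)
  have hrestrict_sub : ∀ x y, restrict x - restrict y = (x - y) ∘ Sum.map (↑) id := by
    intro x y
    ext k
    simp [restrict]
  have hcard := card_le_of_norm_boxCoord L' (S := S) (fun j => hQ j) hδ restrict ht ht1
    (fun x hx => by
      rw [hnorm x hx o ho, boxCoord_sub]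
      linarith [norm_sub_le (boxCoord L Q δ x) (boxCoord L Q δ o), hS x hx, hS o ho])
    (fun x hx y hy hxy => by
      simpa only [hrestrict_sub, hnorm x hx y hy] using hsep hx hy hxy)
  exact hcard.trans <| mul_le_mul_of_nonneg_right
    (monotone_five_mul_add_one_pow (Nat.add_le_add_right (Fintype.card_subtype_le p) _))
    (by positivity)

theorem mem_piFinset_Icc_ceil_floor [DecidableEq J] {q : J → ℤ} :
    q ∈ Fintype.piFinset (fun j => Finset.Icc ⌈-Q j⌉ ⌊Q j⌋) ↔ ∀ j, |(q j : ℝ)| ≤ Q j := by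
  simp only [Fintype.mem_piFinset, Finset.mem_Icc, Int.ceil_le, Int.le_floor, abs_le]

theorem card_piFinset_Icc_ceil_floor_le [DecidableEq J] (hQ : ∀ j, 1 ≤ Q j) :
    ((Fintype.piFinset fun j => Finset.Icc ⌈-Q j⌉ ⌊Q j⌋).card : ℝ) ≤
      3 ^ Fintype.card J * ∏ j, Q j := by
  rw [Fintype.card_piFinset, Nat.cast_prod, ← Finset.card_univ, ← Finset.prod_const,
    ← Finset.prod_mul_distrib]
  refine Finset.prod_le_prod (fun j _ => Nat.cast_nonneg _) fun j _ => ?_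
  have hfloor : 0 ≤ ⌊Q j⌋ := Int.floor_nonneg.2 (zero_le_one.trans (hQ j))
  have hcard : (((Finset.Icc ⌈-Q j⌉ ⌊Q j⌋).card : ℤ) : ℝ) = ⌊Q j⌋ + 1 + ⌊Q j⌋ := by
    rw [Int.ceil_neg, Int.card_Icc, Int.toNat_of_nonneg (by omega)]
    push_cast
    ring
  rw [← Int.cast_natCast, hcard]
  linarith [Int.floor_le (Q j), hQ j]

theorem prod_min_eq_pow_card_mul_prod {p : J → Prop} [DecidablePred p] {a : ℝ}
    (hp : ∀ j, p j ↔ a ≤ Q j) :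
    ∏ j, min (Q j) a = a ^ Fintype.card {j // p j} * ∏ j : {j // ¬p j}, Q j := by
  rw [← Fintype.prod_subtype_mul_prod_subtype p, ← Finset.card_univ, ← Finset.prod_const]
  congr 1
  · exact Finset.prod_congr rfl fun j _ => min_eq_right ((hp j).1 j.2)
  · exact Finset.prod_congr rfl fun j _ => min_eq_left (not_le.1 ((hp j).not.1 j.2)).le

theorem card_le_of_pairwise_le_norm_boxCoord_sub (hQ : ∀ j, 1 ≤ Q j) (hδ : ∀ i, 0 < δ i)
    (ht : 0 < t) (ht1 : t ≤ 1) (hS : ∀ z ∈ S, ‖boxCoord L Q δ z‖ ≤ 1)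
    (hsep : (S : Set (J ⊕ I → ℤ)).Pairwise fun x y => t ≤ ‖boxCoord L Q δ (x - y)‖) :
    (S.card : ℝ) ≤
      (15 * ((Fintype.card J + Fintype.card I : ℕ) + 1)) ^ (Fintype.card J + Fintype.card I) *
      ((∏ j, Q j) * ∏ i, δ i + t * (t⁻¹ ^ Fintype.card I * ∏ j, min (Q j) t⁻¹)) := by
  classical
  have hQ0 : ∀ j, 0 < Q j := fun j => zero_lt_one.trans_le (hQ j)
  let p : J → Prop := fun j => t⁻¹ ≤ Q j
  let short : (J ⊕ I → ℤ) → {j // ¬p j} → ℤ := fun z j => z (.inl j)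
  let box := Fintype.piFinset fun j : {j // ¬p j} => Finset.Icc ⌈-Q j⌉ ⌊Q j⌋
  have hmaps : (S : Set (J ⊕ I → ℤ)).MapsTo short box := by
    intro z hz
    refine mem_piFinset_Icc_ceil_floor.2 fun j => ?_
    simpa only [one_mul] using ((norm_boxCoord_le_iff L hQ0 hδ zero_le_one).1 (hS z hz)).1 j
  set d := Fintype.card J + Fintype.card I
  set B : ℝ := (∏ j : {j // p j}, Q j) * ∏ i, δ i +
    t * t⁻¹ ^ (Fintype.card {j // p j} + Fintype.card I)
  have hB : 0 ≤ B := add_nonneg (mul_nonneg (Finset.prod_nonneg fun j _ => (hQ0 j).le)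
    (Finset.prod_nonneg fun i _ => (hδ i).le)) (by positivity)
  have hslice : ∀ w ∈ box, ((S.filter (short · = w)).card : ℝ) ≤ (5 * ((d : ℝ) + 1)) ^ d * B := by
    intro w _
    refine card_le_of_forall_eq_of_not p hQ0 hδ ht ht1
      (fun z hz => hS z (Finset.filter_subset _ _ hz))
      (hsep.mono (Finset.coe_subset.2 (Finset.filter_subset _ _))) fun x hx y hy j hj => ?_
    exact congr_fun ((Finset.mem_filter.1 hx).2.trans (Finset.mem_filter.1 hy).2.symm) ⟨j, hj⟩
  have hbox : (box.card : ℝ) ≤ 3 ^ d * ∏ j : {j // ¬p j}, Q j :=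
    (card_piFinset_Icc_ceil_floor_le fun j : {j // ¬p j} => hQ j).trans <|
      mul_le_mul_of_nonneg_right (pow_le_pow_right₀ (by norm_num)
        ((Fintype.card_subtype_le _).trans (Nat.le_add_right _ _)))
        (Finset.prod_nonneg fun j _ => (hQ0 j).le)
  have hB_mul : (∏ j : {j // ¬p j}, Q j) * B =
      (∏ j, Q j) * ∏ i, δ i + t * (t⁻¹ ^ Fintype.card I * ∏ j, min (Q j) t⁻¹) := by
    rw [prod_min_eq_pow_card_mul_prod (p := p) fun j => Iff.rfl,
      ← Fintype.prod_subtype_mul_prod_subtype p Q, mul_add, pow_add]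
    ring
  calc (S.card : ℝ) = ∑ w ∈ box, ((S.filter (short · = w)).card : ℝ) := by
        rw [Finset.card_eq_sum_card_fiberwise hmaps, Nat.cast_sum]
    _ ≤ box.card * ((5 * ((d : ℝ) + 1)) ^ d * B) := by
        rw [← nsmul_eq_mul]; exact Finset.sum_le_card_nsmul _ _ _ hslice
    _ ≤ (3 ^ d * ∏ j : {j // ¬p j}, Q j) * ((5 * ((d : ℝ) + 1)) ^ d * B) := by gcongr
    _ = 3 ^ d * (5 * ((d : ℝ) + 1)) ^ d * ((∏ j : {j // ¬p j}, Q j) * B) := by ring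
    _ = _ := by rw [hB_mul, ← mul_pow, ← mul_assoc]; norm_num

end Slicing

section MinimalDifference

theorem exists_ne_norm_sub_le_one_of_two_pow_card_lt {α κ : Type*} [Fintype κ] {S : Finset α}
    {f : α → κ → ℝ} (hf : ∀ x ∈ S, ‖f x‖ ≤ 1) (hS : 2 ^ Fintype.card κ < S.card) :
    ∃ x ∈ S, ∃ y ∈ S, x ≠ y ∧ ‖f x - f y‖ ≤ 1 := by
  classical
  let sign : α → κ → Bool := fun x k => decide (0 ≤ f x k)
  obtain ⟨x, hx, y, hy, hne, hxy⟩ := Finset.exists_ne_map_eq_of_card_lt_of_maps_to (f := sign)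
    (t := Finset.univ) (by simpa using hS) fun _ _ => Finset.mem_univ _
  refine ⟨x, hx, y, hy, hne, (pi_norm_le_iff_of_nonneg zero_le_one).2 fun k => ?_⟩
  have hxk := abs_le.1 ((norm_le_pi_norm (f x) k).trans (hf x hx))
  have hyk := abs_le.1 ((norm_le_pi_norm (f y) k).trans (hf y hy))
  have hsign : 0 ≤ f x k ↔ 0 ≤ f y k := by simpa [sign] using congr_fun hxy k
  rw [Pi.sub_apply, Real.norm_eq_abs, abs_le]
  by_cases h : 0 ≤ f x k
  · constructor <;> linarith [hsign.1 h]
  · constructor <;> linarith [not_le.1 h, not_le.1 (hsign.not.1 h)]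

theorem div_le_rpow_one_sub_inv {Z u : ℝ} {d : ℕ} (hd : d ≠ 0) (hZ : 0 < Z) (hu : 0 ≤ u)
    (hZu : Z ≤ u ^ d) : Z / u ≤ Z ^ (1 - 1 / (d : ℝ)) := by
  have hroot : Z ^ (1 / (d : ℝ)) ≤ u := by
    rw [one_div]
    exact (Real.rpow_le_rpow hZ.le hZu (by positivity)).trans (Real.pow_rpow_inv_natCast hu hd).le
  rw [Real.rpow_sub hZ, Real.rpow_one]
  exact div_le_div_of_nonneg_left hZ.le (Real.rpow_pos_of_pos hZ _) hroot

variable {I J : Type*} [Fintype I] [Fintype J]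

/-- The product `∏ⱼ max(1, |q_j|) · ∏ᵢ |L_i q - p_i|` at the integer point `z = (q, p)`, which
multiplicative bad approximability bounds from below. -/
noncomputable def multHeight (L : Matrix I J ℝ) (z : J ⊕ I → ℤ) : ℝ :=
  (∏ j, max 1 |(z (.inl j) : ℝ)|) * ∏ i, |∑ j, L i j * (z (.inl j) : ℝ) - z (.inr i)|

variable {L : Matrix I J ℝ} {Q : J → ℝ} {δ : I → ℝ}

theorem norm_boxCoord_pos_of_multHeight_pos [Nonempty I] (hQ : ∀ j, 0 < Q j) (hδ : ∀ i, 0 < δ i)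
    {z : J ⊕ I → ℤ} (hz : 0 < multHeight L z) : 0 < ‖boxCoord L Q δ z‖ := by
  by_contra! h
  have hform := ((norm_boxCoord_le_iff L hQ hδ le_rfl).1 h).2
  refine hz.ne' (mul_eq_zero_of_right _ ?_)
  refine Finset.prod_eq_zero (Finset.mem_univ (Classical.arbitrary I)) ?_
  exact le_antisymm ((hform _).trans_eq (zero_mul _)) (abs_nonneg _)

theorem multHeight_mul_le (hQ : ∀ j, 0 < Q j) (hδ : ∀ i, 0 < δ i) {t : ℝ} (ht : 0 < t)
    {z : J ⊕ I → ℤ} (hz : ‖boxCoord L Q δ z‖ ≤ t) :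
    multHeight L z * (t⁻¹ ^ Fintype.card I * ∏ j, min (Q j) t⁻¹) ≤ (∏ j, Q j) * ∏ i, δ i := by
  obtain ⟨hint, hform⟩ := (norm_boxCoord_le_iff L hQ hδ ht.le).1 hz
  have ht' : 0 < t⁻¹ := inv_pos.2 ht
  have hmin : ∀ j, 0 < min (Q j) t⁻¹ := fun j => lt_min (hQ j) ht'
  have hcoord : ∀ j, max 1 |(z (.inl j) : ℝ)| * min (Q j) t⁻¹ ≤ Q j := by
    intro j
    rw [max_mul_of_nonneg _ _ (hmin j).le]
    refine max_le (by rw [one_mul]; exact min_le_left _ _) ?_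
    calc |(z (.inl j) : ℝ)| * min (Q j) t⁻¹ ≤ t * Q j * t⁻¹ :=
          mul_le_mul (hint j) (min_le_right _ _) (hmin j).le (mul_pos ht (hQ j)).le
      _ = Q j := by field_simp
  have hlin : ∀ i, |∑ j, L i j * (z (.inl j) : ℝ) - z (.inr i)| * t⁻¹ ≤ δ i := fun i => by
    rw [← div_eq_mul_inv, div_le_iff₀ ht, mul_comm]
    exact hform i
  calc multHeight L z * (t⁻¹ ^ Fintype.card I * ∏ j, min (Q j) t⁻¹)
      = (∏ j, max 1 |(z (.inl j) : ℝ)| * min (Q j) t⁻¹) *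
          ∏ i, |∑ j, L i j * (z (.inl j) : ℝ) - z (.inr i)| * t⁻¹ := by
        rw [multHeight, Finset.prod_mul_distrib, Finset.prod_mul_distrib, Finset.prod_const,
          Finset.card_univ]
        ring
    _ ≤ (∏ j, Q j) * ∏ i, δ i :=
        mul_le_mul
          (Finset.prod_le_prod (fun j _ => by positivity [hmin j]) fun j _ => hcoord j)
          (Finset.prod_le_prod (fun i _ => by positivity) fun i _ => hlin i)
          (Finset.prod_nonneg fun i _ => by positivity)
          (Finset.prod_nonneg fun j _ => (hQ j).le)

theorem mul_pow_mul_prod_min_le_of_le_multHeight [Nonempty I] (hQ : ∀ j, 0 < Q j)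
    (hδ : ∀ i, 0 < δ i) {c t : ℝ} (hc : 0 < c) (ht : 0 < t) {z : J ⊕ I → ℤ}
    (hz : ‖boxCoord L Q δ z‖ ≤ t) (hcz : c ≤ multHeight L z) :
    t * (t⁻¹ ^ Fintype.card I * ∏ j, min (Q j) t⁻¹) ≤
      ((∏ j, Q j) * (∏ i, δ i) / c) ^ (1 - 1 / ((Fintype.card J + Fintype.card I : ℕ) : ℝ)) := by
  set d := Fintype.card J + Fintype.card I with hd
  set Z := t⁻¹ ^ Fintype.card I * ∏ j, min (Q j) t⁻¹
  have hd0 : d ≠ 0 := (Nat.add_pos_right _ Fintype.card_pos).ne'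
  have ht' : 0 < t⁻¹ := inv_pos.2 ht
  have hZ : 0 < Z := mul_pos (pow_pos ht' _) (Finset.prod_pos fun j _ => lt_min (hQ j) ht')
  have hZV : Z ≤ (∏ j, Q j) * (∏ i, δ i) / c := by
    rw [le_div_iff₀' hc]
    exact (mul_le_mul_of_nonneg_right hcz hZ.le).trans (multHeight_mul_le hQ hδ ht hz)
  have hZt : Z ≤ t⁻¹ ^ d := by
    rw [hd, add_comm, pow_add]
    refine mul_le_mul_of_nonneg_left ?_ (by positivity)
    rw [← Finset.card_univ, ← Finset.prod_const]
    exact Finset.prod_le_prod (fun j _ => (lt_min (hQ j) ht').le) fun j _ => min_le_right _ _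
  have hexp : 0 ≤ 1 - 1 / (d : ℝ) :=
    sub_nonneg.2 (div_le_one_of_le₀ (mod_cast Nat.one_le_iff_ne_zero.2 hd0) d.cast_nonneg)
  calc t * Z = Z / t⁻¹ := by rw [div_inv_eq_mul, mul_comm]
    _ ≤ Z ^ (1 - 1 / (d : ℝ)) := div_le_rpow_one_sub_inv hd0 hZ ht'.le hZt
    _ ≤ _ := Real.rpow_le_rpow hZ.le hZV hexp

theorem exists_ne_norm_sub_le_of_two_pow_card_lt {α κ : Type*} [Fintype κ] {S : Finset α}
    {f : α → κ → ℝ} (hf : ∀ x ∈ S, ‖f x‖ ≤ 1) (hS : 2 ^ Fintype.card κ < S.card) :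
    ∃ x ∈ S, ∃ y ∈ S, x ≠ y ∧ ‖f x - f y‖ ≤ 1 ∧
      (S : Set α).Pairwise fun x' y' => ‖f x - f y‖ ≤ ‖f x' - f y'‖ := by
  obtain ⟨x₀, hx₀, y₀, hy₀, hne₀, hle₀⟩ := exists_ne_norm_sub_le_one_of_two_pow_card_lt hf hS
  have hmem₀ : (x₀, y₀) ∈ S.offDiag := Finset.mem_offDiag.2 ⟨hx₀, hy₀, hne₀⟩
  obtain ⟨⟨x, y⟩, hxy, hmin⟩ :=
    S.offDiag.exists_min_image (fun p => ‖f p.1 - f p.2‖) ⟨_, hmem₀⟩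
  obtain ⟨hx, hy, hne⟩ := Finset.mem_offDiag.1 hxy
  exact ⟨x, hx, y, hy, hne, (hmin _ hmem₀).trans hle₀,
    fun x' hx' y' hy' hne' => hmin (x', y') (Finset.mem_offDiag.2 ⟨hx', hy', hne'⟩)⟩

theorem card_le_of_le_multHeight_sub [Nonempty I] (hQ : ∀ j, 1 ≤ Q j) (hδ : ∀ i, 0 < δ i) {c : ℝ}
    (hc : 0 < c) {S : Finset (J ⊕ I → ℤ)} (hS : ∀ z ∈ S, ‖boxCoord L Q δ z‖ ≤ 1)
    (hbad : (S : Set (J ⊕ I → ℤ)).Pairwise fun x y =>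
      ‖boxCoord L Q δ (x - y)‖ ≤ 1 → c ≤ multHeight L (x - y)) :
    (S.card : ℝ) ≤
      (15 * ((Fintype.card J + Fintype.card I : ℕ) + 1)) ^ (Fintype.card J + Fintype.card I) *
      (1 + (∏ j, Q j) * ∏ i, δ i +
        ((∏ j, Q j) * (∏ i, δ i) / c) ^ (1 - 1 / ((Fintype.card J + Fintype.card I : ℕ) : ℝ))) := by
  have hQ0 : ∀ j, 0 < Q j := fun j => zero_lt_one.trans_le (hQ j)
  set d := Fintype.card J + Fintype.card I
  set V := (∏ j, Q j) * ∏ i, δ i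
  have hV : 0 < V :=
    mul_pos (Finset.prod_pos fun j _ => hQ0 j) (Finset.prod_pos fun i _ => hδ i)
  rcases le_or_gt S.card (2 ^ d) with hsmall | hlarge
  · calc (S.card : ℝ) ≤ 2 ^ d := mod_cast hsmall
      _ ≤ (15 * ((d : ℝ) + 1)) ^ d :=
        pow_le_pow_left₀ zero_le_two (by linarith [(d.cast_nonneg : (0 : ℝ) ≤ d)]) d
      _ ≤ _ := by
        rw [add_assoc]
        exact le_mul_of_one_le_right (by positivity) (le_add_of_nonneg_right (by positivity))
  · obtain ⟨x, hx, y, hy, hne, hle, hmin⟩ :=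
      exists_ne_norm_sub_le_of_two_pow_card_lt hS (by rwa [Fintype.card_sum])
    simp only [← boxCoord_sub] at hle hmin
    have hheight : c ≤ multHeight L (x - y) := hbad hx hy hne hle
    have hpos := norm_boxCoord_pos_of_multHeight_pos hQ0 hδ (hc.trans_le hheight)
    refine (card_le_of_pairwise_le_norm_boxCoord_sub hQ hδ hpos hle hS hmin).trans ?_
    refine mul_le_mul_of_nonneg_left ?_ (by positivity)
    linarith [mul_pow_mul_prod_min_le_of_le_multHeight hQ0 hδ hc hpos le_rfl hheight]

end MinimalDifference

section DyadicSummation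

theorem card_piAntidiag_univ_le {ι : Type*} [Fintype ι] [DecidableEq ι] [Nonempty ι] (s : ℕ) :
    (Finset.piAntidiag (Finset.univ : Finset ι) s).card ≤ (s + 1) ^ (Fintype.card ι - 1) := by
  let i₀ := Classical.arbitrary ι
  let restrict : (ι → ℕ) → {i // i ≠ i₀} → ℕ := fun k i => k i
  have hmaps : ∀ k ∈ Finset.piAntidiag (Finset.univ : Finset ι) s,
      restrict k ∈ Fintype.piFinset fun _ : {i // i ≠ i₀} => Finset.range (s + 1) := by
    intro k hk
    refine Fintype.mem_piFinset.2 fun i => Finset.mem_range_succ_iff.2 ?_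
    rw [← (Finset.mem_piAntidiag.1 hk).1]
    exact Finset.single_le_sum (f := k) (fun _ _ => Nat.zero_le _) (Finset.mem_univ _)
  have hinj : Set.InjOn restrict (Finset.piAntidiag (Finset.univ : Finset ι) s) := by
    intro k hk l hl hkl
    have hne : ∀ i ≠ i₀, k i = l i := fun i hi => congr_fun hkl ⟨i, hi⟩
    have hsum : ∑ i, k i = ∑ i, l i :=
      (Finset.mem_piAntidiag.1 hk).1.trans (Finset.mem_piAntidiag.1 hl).1.symm
    have hrest : ∑ i ∈ Finset.univ.erase i₀, k i = ∑ i ∈ Finset.univ.erase i₀, l i :=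
      Finset.sum_congr rfl fun i hi => hne i (Finset.ne_of_mem_erase hi)
    rw [← Finset.add_sum_erase _ _ (Finset.mem_univ i₀),
      ← Finset.add_sum_erase _ l (Finset.mem_univ i₀), hrest, add_left_inj] at hsum
    ext i
    by_cases hi : i = i₀
    · rw [hi, hsum]
    · exact hne i hi
  calc _ ≤ _ := Finset.card_le_card_of_injOn restrict hmaps hinj
    _ = (s + 1) ^ (Fintype.card ι - 1) := by
      rw [Fintype.card_piFinset, Finset.prod_const, Finset.card_range, Finset.card_univ,
        Fintype.card_subtype_compl, Fintype.card_subtype_eq]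

theorem two_pow_log_floor_le {y : ℝ} (hy : 1 ≤ y) : (2 : ℝ) ^ Nat.log 2 ⌊y⌋₊ ≤ y :=
  calc (2 : ℝ) ^ Nat.log 2 ⌊y⌋₊ ≤ (⌊y⌋₊ : ℝ) :=
        mod_cast Nat.pow_log_le_self 2 (Nat.floor_pos.2 hy).ne'
    _ ≤ y := Nat.floor_le (zero_le_one.trans hy)

theorem lt_two_pow_log_floor_succ (y : ℝ) : y < 2 ^ (Nat.log 2 ⌊y⌋₊ + 1) :=
  calc y < ⌊y⌋₊ + 1 := Nat.lt_floor_add_one y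
    _ ≤ 2 ^ (Nat.log 2 ⌊y⌋₊ + 1) := mod_cast Nat.lt_pow_succ_log_self one_lt_two _

theorem le_log_floor_of_two_pow_le {s : ℕ} {y : ℝ} (hs : (2 : ℝ) ^ s ≤ y) : s ≤ Nat.log 2 ⌊y⌋₊ :=
  Nat.le_log_of_pow_le one_lt_two (Nat.le_floor (mod_cast hs))

theorem two_pow_mul_one_add_div_add_rpow_le {s m : ℕ} {X Y θ : ℝ} (hsm : s ≤ m)
    (hmY : (2 : ℝ) ^ m ≤ Y) (hθ : 0 ≤ θ) (hθ1 : θ ≤ 1) :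
    2 ^ s * (1 + X / 2 ^ s + (Y / 2 ^ s) ^ (1 - θ)) ≤ X + 2 * Y * (2 ^ (-θ)) ^ (m - s) := by
  have hu : (2 : ℝ) ^ (m - s) ≤ Y / 2 ^ s := by
    rw [le_div_iff₀ (by positivity), ← pow_add, Nat.sub_add_cancel hsm]
    exact hmY
  have hu1 : 1 ≤ Y / 2 ^ s := (one_le_pow₀ one_le_two).trans hu
  have hone : 1 ≤ (Y / 2 ^ s) ^ (1 - θ) := Real.one_le_rpow hu1 (sub_nonneg.2 hθ1)
  have hrpow : (Y / 2 ^ s) ^ (1 - θ) ≤ Y / 2 ^ s * (2 ^ (-θ)) ^ (m - s) := by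
    rw [sub_eq_add_neg, Real.rpow_add (zero_lt_one.trans_le hu1), Real.rpow_one,
      Real.rpow_pow_comm zero_le_two]
    exact mul_le_mul_of_nonneg_left
      (Real.rpow_le_rpow_of_nonpos (by positivity) hu (neg_nonpos.2 hθ)) (by positivity)
  calc 2 ^ s * (1 + X / 2 ^ s + (Y / 2 ^ s) ^ (1 - θ))
      ≤ 2 ^ s * (X / 2 ^ s + 2 * (Y / 2 ^ s * (2 ^ (-θ)) ^ (m - s))) :=
        mul_le_mul_of_nonneg_left (by linarith) (by positivity)
    _ = X + 2 * Y * (2 ^ (-θ)) ^ (m - s) := by field_simp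

theorem sum_range_pow_sub_le {ρ : ℝ} (hρ : 0 ≤ ρ) (hρ1 : ρ < 1) (m : ℕ) :
    ∑ s ∈ Finset.range (m + 1), ρ ^ (m - s) ≤ (1 - ρ)⁻¹ := by
  have hreflect := Finset.sum_range_reflect (fun s => ρ ^ s) (m + 1)
  simp only [Nat.add_sub_cancel] at hreflect
  rw [hreflect, ← tsum_geometric_of_lt_one hρ hρ1]
  exact (summable_geometric_of_lt_one hρ hρ1).sum_le_tsum _ fun _ _ => pow_nonneg hρ _

theorem sum_range_mul_two_pow_mul_le {m n : ℕ} {X Y θ : ℝ} (hX : 0 ≤ X) (hmY : (2 : ℝ) ^ m ≤ Y)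
    (hθ : 0 < θ) (hθ1 : θ ≤ 1) :
    ∑ s ∈ Finset.range (m + 1),
        ((s : ℝ) + 1) ^ n * (2 ^ s * (1 + X / 2 ^ s + (Y / 2 ^ s) ^ (1 - θ))) ≤
      (m + 1) ^ n * ((m + 1) * X + 2 / (1 - 2 ^ (-θ)) * Y) := by
  have hρ1 : (2 : ℝ) ^ (-θ) < 1 := Real.rpow_lt_one_of_one_lt_of_neg one_lt_two (neg_lt_zero.2 hθ)
  have hY : 0 ≤ Y := (by positivity : (0 : ℝ) ≤ 2 ^ m).trans hmY
  have hlayer : ∀ s ∈ Finset.range (m + 1),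
      ((s : ℝ) + 1) ^ n * (2 ^ s * (1 + X / 2 ^ s + (Y / 2 ^ s) ^ (1 - θ))) ≤
        (m + 1) ^ n * (X + 2 * Y * (2 ^ (-θ)) ^ (m - s)) := by
    intro s hs
    have hsm : s ≤ m := Finset.mem_range_succ_iff.1 hs
    have hsm' : (s : ℝ) ≤ m := mod_cast hsm
    refine mul_le_mul (by gcongr) (two_pow_mul_one_add_div_add_rpow_le hsm hmY hθ.le hθ1) ?_ ?_ <;>
      positivity
  calc _ ≤ ∑ s ∈ Finset.range (m + 1), ((m : ℝ) + 1) ^ n * (X + 2 * Y * (2 ^ (-θ)) ^ (m - s)) :=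
        Finset.sum_le_sum hlayer
    _ = (m + 1) ^ n *
          ((m + 1) * X + 2 * Y * ∑ s ∈ Finset.range (m + 1), ((2 : ℝ) ^ (-θ)) ^ (m - s)) := by
        rw [← Finset.mul_sum, Finset.sum_add_distrib, ← Finset.mul_sum, Finset.sum_const,
          Finset.card_range, nsmul_eq_mul, Nat.cast_succ]
    _ ≤ (m + 1) ^ n * ((m + 1) * X + 2 * Y * (1 - 2 ^ (-θ))⁻¹) := by
        gcongr
        exact sum_range_pow_sub_le (by positivity) hρ1 m
    _ = _ := by ring

variable {α ι : Type*}

/-- The vector of exponents `k` with `2 ^ (-(kᵢ + 1)) < vᵢ ≤ 2 ^ (-kᵢ)`, for `v` with entries in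
`(0, 1]`; points are grouped by it in order to sum `∏ᵢ vᵢ⁻¹`. -/
noncomputable def dyadicLevel (v : ι → ℝ) (i : ι) : ℕ := Nat.log 2 ⌊(v i)⁻¹⌋₊

theorem le_inv_two_pow_dyadicLevel {v : ι → ℝ} {i : ι} (hv : 0 < v i) (hv1 : v i ≤ 1) :
    v i ≤ (2 ^ dyadicLevel v i)⁻¹ :=
  le_inv_of_le_inv₀ (by positivity) (two_pow_log_floor_le ((one_le_inv₀ hv).2 hv1))

variable [Fintype ι] {v : ι → ℝ} {Y : ℝ}

theorem two_pow_sum_dyadicLevel_le (hv : ∀ i, 0 < v i) (hv1 : ∀ i, v i ≤ 1) :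
    (2 : ℝ) ^ (∑ i, dyadicLevel v i) ≤ ∏ i, (v i)⁻¹ := by
  rw [← Finset.prod_pow_eq_pow_sum]
  exact Finset.prod_le_prod (fun i _ => by positivity) fun i _ =>
    two_pow_log_floor_le ((one_le_inv₀ (hv i)).2 (hv1 i))

theorem prod_inv_le_two_pow_sum_dyadicLevel (hv : ∀ i, 0 < v i) :
    ∏ i, (v i)⁻¹ ≤ 2 ^ Fintype.card ι * 2 ^ (∑ i, dyadicLevel v i) :=
  calc ∏ i, (v i)⁻¹ ≤ ∏ i, 2 ^ (dyadicLevel v i + 1) :=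
        Finset.prod_le_prod (fun i _ => (inv_pos.2 (hv i)).le) fun _ _ =>
          (lt_two_pow_log_floor_succ _).le
    _ = 2 ^ Fintype.card ι * 2 ^ (∑ i, dyadicLevel v i) := by
        simp only [pow_succ', Finset.prod_mul_distrib, Finset.prod_const, Finset.card_univ,
          Finset.prod_pow_eq_pow_sum]

variable [Nonempty ι] {T : Finset α} {D : α → ι → ℝ} {B : ℕ → ℝ}

theorem card_sum_dyadicLevel_eq_le (hB : ∀ s, 0 ≤ B s) (hD : ∀ x ∈ T, ∀ i, 0 < D x i)
    (hD1 : ∀ x ∈ T, ∀ i, D x i ≤ 1)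
    (hcard : ∀ U ⊆ T, ∀ k : ι → ℕ, (∀ x ∈ U, ∀ i, D x i ≤ (2 ^ k i)⁻¹) →
      (U.card : ℝ) ≤ B (∑ i, k i)) (s : ℕ) :
    ((T.filter fun x => ∑ i, dyadicLevel (D x) i = s).card : ℝ) ≤
      ((s : ℝ) + 1) ^ (Fintype.card ι - 1) * B s := by
  classical
  set layer := T.filter fun x => ∑ i, dyadicLevel (D x) i = s
  let levels := Finset.piAntidiag (Finset.univ : Finset ι) s
  have hmaps : (layer : Set α).MapsTo (fun x => dyadicLevel (D x)) levels := fun x hx =>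
    Finset.mem_piAntidiag.2 ⟨(Finset.mem_filter.1 hx).2, fun i _ => Finset.mem_univ i⟩
  have hfiber : ∀ k ∈ levels, ((layer.filter fun x => dyadicLevel (D x) = k).card : ℝ) ≤ B s := by
    intro k hk
    rw [← (Finset.mem_piAntidiag.1 hk).1]
    refine hcard _ ((Finset.filter_subset _ _).trans (Finset.filter_subset _ _)) k fun x hx i => ?_
    obtain ⟨hlayer, rfl⟩ := Finset.mem_filter.1 hx
    have hxT : x ∈ T := Finset.filter_subset _ _ hlayer
    exact le_inv_two_pow_dyadicLevel (hD x hxT i) (hD1 x hxT i)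
  calc (layer.card : ℝ)
      = ∑ k ∈ levels, ((layer.filter fun x => dyadicLevel (D x) = k).card : ℝ) := by
        rw [Finset.card_eq_sum_card_fiberwise hmaps, Nat.cast_sum]
    _ ≤ levels.card * B s := by
        rw [← nsmul_eq_mul]
        exact Finset.sum_le_card_nsmul _ _ _ hfiber
    _ ≤ ((s : ℝ) + 1) ^ (Fintype.card ι - 1) * B s :=
        mul_le_mul_of_nonneg_right (mod_cast card_piAntidiag_univ_le s) (hB s)

theorem sum_prod_inv_le_of_card_le (hB : ∀ s, 0 ≤ B s) (hD : ∀ x ∈ T, ∀ i, 0 < D x i)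
    (hD1 : ∀ x ∈ T, ∀ i, D x i ≤ 1) (hDY : ∀ x ∈ T, ∏ i, (D x i)⁻¹ ≤ Y)
    (hcard : ∀ U ⊆ T, ∀ k : ι → ℕ, (∀ x ∈ U, ∀ i, D x i ≤ (2 ^ k i)⁻¹) →
      (U.card : ℝ) ≤ B (∑ i, k i)) :
    ∑ x ∈ T, ∏ i, (D x i)⁻¹ ≤ 2 ^ Fintype.card ι *
      ∑ s ∈ Finset.range (Nat.log 2 ⌊Y⌋₊ + 1),
        ((s : ℝ) + 1) ^ (Fintype.card ι - 1) * (2 ^ s * B s) := by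
  have hmaps : ∀ x ∈ T, ∑ i, dyadicLevel (D x) i ∈ Finset.range (Nat.log 2 ⌊Y⌋₊ + 1) :=
    fun x hx => Finset.mem_range_succ_iff.2 <| le_log_floor_of_two_pow_le <|
      (two_pow_sum_dyadicLevel_le (hD x hx) (hD1 x hx)).trans (hDY x hx)
  rw [← Finset.sum_fiberwise_of_maps_to hmaps, Finset.mul_sum]
  refine Finset.sum_le_sum fun s _ => ?_
  calc ∑ x ∈ T with ∑ i, dyadicLevel (D x) i = s, ∏ i, (D x i)⁻¹
      ≤ ((T.filter fun x => ∑ i, dyadicLevel (D x) i = s).card : ℝ) *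
          (2 ^ Fintype.card ι * 2 ^ s) := by
        rw [← nsmul_eq_mul]
        refine Finset.sum_le_card_nsmul _ _ _ fun x hx => ?_
        obtain ⟨hxT, rfl⟩ := Finset.mem_filter.1 hx
        exact prod_inv_le_two_pow_sum_dyadicLevel (hD x hxT)
    _ ≤ ((s : ℝ) + 1) ^ (Fintype.card ι - 1) * B s * (2 ^ Fintype.card ι * 2 ^ s) := by
        gcongr
        exact card_sum_dyadicLevel_eq_le hB hD hD1 hcard s
    _ = _ := by ring

end DyadicSummation

section BadlyApproximable

theorem distNearestInt_le_half (x : ℝ) : distNearestInt x ≤ 1 / 2 :=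
  abs_sub_round x

theorem distNearestInt_nonneg (x : ℝ) : 0 ≤ distNearestInt x :=
  abs_nonneg _

theorem distNearestInt_le_abs_sub_intCast (x : ℝ) (n : ℤ) : distNearestInt x ≤ |x - n| :=
  round_le x n

theorem pos_of_le_mul_prod {ι : Type*} [Fintype ι] {v : ι → ℝ} {X c : ℝ} (hv : ∀ i, 0 ≤ v i)
    (hc : 0 < c) (h : c ≤ X * ∏ i, v i) (i : ι) : 0 < v i :=
  (hv i).lt_of_ne' fun hi => (hc.trans_le h).ne'
    (mul_eq_zero_of_right X (Finset.prod_eq_zero (Finset.mem_univ i) hi))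

theorem prod_inv_le_div {ι : Type*} [Fintype ι] {v : ι → ℝ} {X c : ℝ} (hv : ∀ i, 0 < v i)
    (hc : 0 < c) (h : c ≤ X * ∏ i, v i) : ∏ i, (v i)⁻¹ ≤ X / c := by
  rw [Finset.prod_inv_distrib, le_div_iff₀ hc,
    inv_mul_le_iff₀ (Finset.prod_pos fun i _ => hv i), mul_comm]
  exact h

variable {I J : Type*} [Fintype I] [Fintype J] {L : Matrix I J ℝ} {Q : J → ℝ} {c : ℝ}

theorem mul_prod_distNearestInt_le_multHeight (z : J ⊕ I → ℤ) :
    (∏ j, max 1 |(z (.inl j) : ℝ)|) * ∏ i, distNearestInt (∑ j, L i j * (z (.inl j) : ℝ)) ≤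
      multHeight L z :=
  mul_le_mul_of_nonneg_left
    (Finset.prod_le_prod (fun _ _ => distNearestInt_nonneg _) fun _ _ =>
      distNearestInt_le_abs_sub_intCast _ _)
    (by positivity)

theorem card_le_of_distNearestInt_le [Nonempty I] (hQ : ∀ j, 1 ≤ Q j) (hc : 0 < c)
    (hbad : ∀ q : J → ℤ, q ≠ 0 → (∀ j, |(q j : ℝ)| ≤ Q j) →
      c ≤ (∏ j, max 1 |(q j : ℝ)|) * ∏ i, distNearestInt (∑ j, L i j * (q j : ℝ)))
    {δ : I → ℝ} (hδ : ∀ i, 0 < δ i) {U : Finset (J → ℤ)} (hUQ : ∀ q ∈ U, ∀ j, |(q j : ℝ)| ≤ Q j)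
    (hUδ : ∀ q ∈ U, ∀ i, distNearestInt (∑ j, L i j * (q j : ℝ)) ≤ δ i) :
    (U.card : ℝ) ≤
      (15 * ((Fintype.card J + Fintype.card I : ℕ) + 1)) ^ (Fintype.card J + Fintype.card I) *
      (1 + (∏ j, Q j) * ∏ i, δ i +
        ((∏ j, Q j) * (∏ i, δ i) / c) ^ (1 - 1 / ((Fintype.card J + Fintype.card I : ℕ) : ℝ))) := by
  have hQ0 : ∀ j, 0 < Q j := fun j => zero_lt_one.trans_le (hQ j)
  let nearest : (J → ℤ) ↪ (J ⊕ I → ℤ) :=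
    ⟨fun q => Sum.elim q fun i => round (∑ j, L i j * (q j : ℝ)),
      fun q r h => (Sum.elim_eq_iff.1 h).1⟩
  rw [← Finset.card_map nearest]
  refine card_le_of_le_multHeight_sub (L := L) hQ hδ hc ?_ ?_
  · intro z hz
    obtain ⟨q, hq, rfl⟩ := Finset.mem_map.1 hz
    refine (norm_boxCoord_le_iff L hQ0 hδ zero_le_one).2 ⟨fun j => ?_, fun i => ?_⟩
    · rw [one_mul]
      exact hUQ q hq j
    · rw [one_mul]
      exact hUδ q hq i
  · intro x hx y hy hxy hle
    obtain ⟨q, -, rfl⟩ := Finset.mem_map.1 hx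
    obtain ⟨r, -, rfl⟩ := Finset.mem_map.1 hy
    have hbox := ((norm_boxCoord_le_iff L hQ0 hδ zero_le_one).1 hle).1
    simp only [one_mul] at hbox
    have hqr : q - r ≠ 0 := sub_ne_zero.2 fun h => hxy (congrArg nearest h)
    exact (hbad (q - r) hqr hbox).trans
      (mul_prod_distNearestInt_le_multHeight (nearest q - nearest r))

theorem sum_prod_distNearestInt_inv_le [Nonempty I] (hQ : ∀ j, 1 ≤ Q j) (hc : 0 < c) (hc1 : c ≤ 1)
    (hbad : ∀ q : J → ℤ, q ≠ 0 → (∀ j, |(q j : ℝ)| ≤ Q j) →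
      c ≤ (∏ j, max 1 |(q j : ℝ)|) * ∏ i, distNearestInt (∑ j, L i j * (q j : ℝ)))
    {T : Finset (J → ℤ)} (hT0 : 0 ∉ T) (hT : ∀ q ∈ T, ∀ j, |(q j : ℝ)| ≤ Q j) :
    ∑ q ∈ T, ∏ i, (distNearestInt (∑ j, L i j * (q j : ℝ)))⁻¹ ≤
      2 ^ Fintype.card I *
      ((15 * ((Fintype.card J + Fintype.card I : ℕ) + 1)) ^ (Fintype.card J + Fintype.card I) *
        ((Nat.log 2 ⌊(∏ j, Q j) / c⌋₊ + 1) ^ (Fintype.card I - 1) *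
          ((Nat.log 2 ⌊(∏ j, Q j) / c⌋₊ + 1) * (∏ j, Q j) +
            2 / (1 - 2 ^ (-(1 / ((Fintype.card J + Fintype.card I : ℕ) : ℝ)))) *
              ((∏ j, Q j) / c)))) := by
  set d := Fintype.card J + Fintype.card I
  set X := ∏ j, Q j
  have hd : (1 : ℝ) ≤ d := mod_cast Fintype.card_pos.trans_le (Nat.le_add_left _ _)
  have hX : 1 ≤ X := Finset.one_le_prod fun j _ => hQ j
  have hY : 1 ≤ X / c := (one_le_div hc).2 (hc1.trans hX)
  let C : ℝ := (15 * ((d : ℝ) + 1)) ^ d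
  let B : ℕ → ℝ := fun s => C * (1 + X / 2 ^ s + (X / c / 2 ^ s) ^ (1 - 1 / (d : ℝ)))
  let D : (J → ℤ) → I → ℝ := fun q i => distNearestInt (∑ j, L i j * (q j : ℝ))
  have hlower : ∀ q ∈ T, c ≤ X * ∏ i, D q i := fun q hq =>
    (hbad q (ne_of_mem_of_not_mem hq hT0) (hT q hq)).trans <| mul_le_mul_of_nonneg_right
      (Finset.prod_le_prod (fun _ _ => by positivity) fun j _ => max_le (hQ j) (hT q hq j))
      (Finset.prod_nonneg fun _ _ => distNearestInt_nonneg _)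
  have hD : ∀ q ∈ T, ∀ i, 0 < D q i := fun q hq =>
    pos_of_le_mul_prod (fun _ => distNearestInt_nonneg _) hc (hlower q hq)
  have hDY : ∀ q ∈ T, ∏ i, (D q i)⁻¹ ≤ X / c := fun q hq =>
    prod_inv_le_div (hD q hq) hc (hlower q hq)
  have hcard : ∀ U ⊆ T, ∀ k : I → ℕ, (∀ q ∈ U, ∀ i, D q i ≤ (2 ^ k i)⁻¹) →
      (U.card : ℝ) ≤ B (∑ i, k i) := by
    intro U hUT k hU
    have := card_le_of_distNearestInt_le hQ hc hbad (fun i => by positivity)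
      (fun q hq => hT q (hUT hq)) hU
    rwa [Finset.prod_inv_distrib, Finset.prod_pow_eq_pow_sum, ← div_eq_mul_inv,
      div_right_comm] at this
  calc _ ≤ _ := sum_prod_inv_le_of_card_le (fun s => by positivity) hD
        (fun q _ i => (distNearestInt_le_half _).trans (by norm_num)) hDY hcard
    _ = 2 ^ Fintype.card I * (C * ∑ s ∈ Finset.range (Nat.log 2 ⌊X / c⌋₊ + 1),
          ((s : ℝ) + 1) ^ (Fintype.card I - 1) *
            (2 ^ s * (1 + X / 2 ^ s + (X / c / 2 ^ s) ^ (1 - 1 / (d : ℝ))))) := by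
        rw [Finset.mul_sum _ _ C]
        congr! 2
        ring
    _ ≤ _ := by
        gcongr
        exact sum_range_mul_two_pow_mul_le (zero_le_one.trans hX) (two_pow_log_floor_le hY)
          (by positivity) (div_le_one_of_le₀ hd (zero_le_one.trans hd))

theorem geomMean_pow {N : ℕ} (hN : N ≠ 0) {Q : Fin N → ℝ} (hQ : ∀ j, 0 ≤ Q j) :
    geomMean N Q ^ N = ∏ j, Q j := by
  rw [geomMean, one_div, Real.rpow_inv_natCast_pow (Finset.prod_nonneg fun j _ => hQ j) hN]

theorem geomMean_le_geomMean {N : ℕ} {Q R : Fin N → ℝ} (hQ : ∀ j, 0 ≤ Q j)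
    (hQR : ∀ j, Q j ≤ R j) : geomMean N Q ≤ geomMean N R :=
  Real.rpow_le_rpow (Finset.prod_nonneg fun j _ => hQ j)
    (Finset.prod_le_prod (fun j _ => hQ j) fun j _ => hQR j) (by positivity)

theorem multBadlyApprox.le_mul_prod_distNearestInt {M N : ℕ} {φ : ℝ → ℝ}
    {L : Matrix (Fin M) (Fin N) ℝ} (hL : multBadlyApprox M N φ L) (hφ : AntitoneOn φ (Set.Ici 0))
    {Q : Fin N → ℝ} (hQ : ∀ j, 1 ≤ Q j) {q : Fin N → ℤ} (hq : q ≠ 0)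
    (hqQ : ∀ j, |(q j : ℝ)| ≤ Q j) :
    φ (geomMean N Q) ≤
      (∏ j, max 1 |(q j : ℝ)|) * ∏ i, distNearestInt (∑ j, L i j * (q j : ℝ)) := by
  have hle : geomMean N (fun j => max 1 |(q j : ℝ)|) ≤ geomMean N Q :=
    geomMean_le_geomMean (fun j => by positivity) fun j => max_le (hQ j) (hqQ j)
  have hnonneg : 0 ≤ geomMean N (fun j => max 1 |(q j : ℝ)|) := by
    rw [geomMean]
    positivity
  exact (hφ hnonneg (hnonneg.trans hle) hle).trans (hL q hq)

theorem multBadlyApprox.SLQ_le {M N : ℕ} (hM : M ≠ 0) (hN : N ≠ 0) {φ : ℝ → ℝ}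
    {L : Matrix (Fin M) (Fin N) ℝ} (hL : multBadlyApprox M N φ L) (hφ : AntitoneOn φ (Set.Ici 0))
    {Q : Fin N → ℝ} (hQ : ∀ j, 1 ≤ Q j) (hφ0 : 0 < φ (geomMean N Q))
    (hφ1 : φ (geomMean N Q) ≤ 1) :
    SLQ M N L Q ≤ 2 ^ M * ((15 * ((N + M : ℕ) + 1)) ^ (N + M) *
      ((Nat.log 2 ⌊geomMean N Q ^ N / φ (geomMean N Q)⌋₊ + 1) ^ (M - 1) *
        ((Nat.log 2 ⌊geomMean N Q ^ N / φ (geomMean N Q)⌋₊ + 1) * geomMean N Q ^ N +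
          2 / (1 - 2 ^ (-(1 / ((N + M : ℕ) : ℝ)))) * (geomMean N Q ^ N / φ (geomMean N Q))))) := by
  have : Nonempty (Fin M) := Fin.pos_iff_nonempty.1 (Nat.pos_of_ne_zero hM)
  have hsum := sum_prod_distNearestInt_inv_le hQ hφ0 hφ1
    (fun q hq hqQ => hL.le_mul_prod_distNearestInt hφ hQ hq hqQ)
    (Finset.notMem_erase 0 (Fintype.piFinset fun j => Finset.Icc ⌈-Q j⌉ ⌊Q j⌋))
    fun q hq => mem_piFinset_Icc_ceil_floor.1 (Finset.mem_of_mem_erase hq)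
  rwa [Fintype.card_fin, Fintype.card_fin,
    ← geomMean_pow hN fun j => zero_le_one.trans (hQ j)] at hsum

theorem natLog_floor_pow_div_add_one_le {N : ℕ} (hN : N ≠ 0) {G : ℝ} (hG : 2 ≤ G) (hc : 0 < c)
    (hc1 : c ≤ 1) :
    (Nat.log 2 ⌊G ^ N / c⌋₊ + 1 : ℝ) ≤ (N + 1) / Real.log 2 * Real.log (G / c) := by
  have hGc : 2 ≤ G / c := hG.trans (le_div_self (zero_le_two.trans hG) hc hc1)
  have hY : 1 ≤ G ^ N / c := (one_le_div hc).2 (hc1.trans (one_le_pow₀ (one_le_two.trans hG)))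
  have hYG : G ^ N / c ≤ (G / c) ^ N := by
    rw [div_pow]
    exact div_le_div_of_nonneg_left (by positivity) (by positivity)
      (pow_le_of_le_one hc.le hc1 hN)
  have hlog : Nat.log 2 ⌊G ^ N / c⌋₊ * Real.log 2 ≤ N * Real.log (G / c) := by
    rw [← Real.log_pow, ← Real.log_pow]
    exact Real.log_le_log (by positivity) ((two_pow_log_floor_le hY).trans hYG)
  have hlog2 : Real.log 2 ≤ Real.log (G / c) := Real.log_le_log zero_lt_two hGc
  rw [div_mul_eq_mul_div, le_div_iff₀ (Real.log_pos one_lt_two)]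
  linarith

theorem pow_pred_mul_mul_add_le {n : ℕ} (hn : n ≠ 0) {a u x X Y W : ℝ} (ha : 1 ≤ a) (hu : 0 ≤ u)
    (hx : 0 ≤ x) (hux : u ≤ a * x) (hX : 0 ≤ X) (hY : 0 ≤ Y) (hW : 0 ≤ W) :
    u ^ (n - 1) * (u * X + W * Y) ≤ a ^ n * (1 + W) * (X * x ^ n + Y * x ^ (n - 1)) := by
  obtain ⟨n, rfl⟩ := Nat.exists_eq_add_one_of_ne_zero hn
  have hpow : ∀ k ≤ n + 1, u ^ k ≤ a ^ (n + 1) * x ^ k := fun k hk =>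
    calc u ^ k ≤ a ^ k * x ^ k := (pow_le_pow_left₀ hu hux k).trans_eq (mul_pow a x k)
      _ ≤ a ^ (n + 1) * x ^ k := by gcongr
  calc u ^ n * (u * X + W * Y) = u ^ (n + 1) * (1 * X) + u ^ n * (W * Y) := by ring
    _ ≤ a ^ (n + 1) * x ^ (n + 1) * ((1 + W) * X) + a ^ (n + 1) * x ^ n * ((1 + W) * Y) := by
        gcongr <;> first | exact hpow _ (by omega) | linarith
    _ = _ := by
        rw [Nat.add_sub_cancel]
        ring

end BadlyApproximable

theorem stmt0 (M N : ℕ) (hM : 0 < M) (hN : 0 < N) :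
    ∃ c₀ : ℝ, 0 < c₀ ∧
      ∀ φ : ℝ → ℝ, AntitoneOn φ (Set.Ici 0) → (∀ x : ℝ, 0 ≤ x → φ x ∈ Set.Ioc (0 : ℝ) 1) →
      ∀ L : Matrix (Fin M) (Fin N) ℝ, rowUnitIndep M N L → multBadlyApprox M N φ L →
      ∀ Q : Fin N → ℝ, (∀ j, 1 ≤ Q j) → 2 ≤ geomMean N Q →
        SLQ M N L Q ≤
          c₀ * (geomMean N Q ^ N *
                  Real.log (geomMean N Q / φ (geomMean N Q)) ^ M +
                geomMean N Q ^ N / φ (geomMean N Q) *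
                  Real.log (geomMean N Q / φ (geomMean N Q)) ^ (M - 1)) := by
  let a : ℝ := (N + 1) / Real.log 2
  let W : ℝ := 2 / (1 - 2 ^ (-(1 / ((N + M : ℕ) : ℝ))))
  let C : ℝ := (15 * ((N + M : ℕ) + 1)) ^ (N + M)
  have ha : 1 ≤ a := (one_le_div (Real.log_pos one_lt_two)).2
    (by linarith [Real.log_two_lt_d9, (N.cast_nonneg : (0 : ℝ) ≤ N)])
  have hW : 0 ≤ W := div_nonneg zero_le_two <| sub_nonneg.2 <|
    Real.rpow_le_one_of_one_le_of_nonpos one_le_two (neg_nonpos.2 (by positivity))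
  refine ⟨2 ^ M * (C * (a ^ M * (1 + W))), by positivity, fun φ hφ hφ01 L _ hL Q hQ hG => ?_⟩
  obtain ⟨hc, hc1⟩ := hφ01 (geomMean N Q) (zero_le_two.trans hG)
  have hlog : 0 ≤ Real.log (geomMean N Q / φ (geomMean N Q)) :=
    Real.log_nonneg ((one_le_div hc).2 (hc1.trans (one_le_two.trans hG)))
  refine (hL.SLQ_le hM.ne' hN.ne' hφ hQ hc hc1).trans ?_
  rw [mul_assoc (2 ^ M), mul_assoc C]
  refine mul_le_mul_of_nonneg_left (mul_le_mul_of_nonneg_left ?_ (by positivity)) (by positivity)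
  exact pow_pred_mul_mul_add_le hM.ne' ha (by positivity) hlog
    (natLog_floor_pow_div_add_one_le hN.ne' hG hc hc1) (by positivity) (by positivity) hW
end

section
/- Let M be a positive integer and let ε, T > 0 satisfy T^M/ε > e^M. Then there exist a finite index set 𝒦, a partition H_+ = ⋃_{k∈𝒦} X_k of H_+ into pairwise disjoint sets, a real constant c depending only on M, and reals a^k_i (k ∈ 𝒦, 1 ≤ i ≤ M) such that, defining linear maps φ_k : ℝ^M → ℝ^M by φ_k(x)_i := e^{a^k_i − c} x_i, the following hold: (i) #𝒦 ≤ c₁ (log(T/ε^{1/M}))^{M−1} for a constant c₁ depending only on M; (ii-a) e^{a^k_i − c} ≥ c₂ ε^{1/M}/T for all k and i, for a constant c₂ > 0 depending only on M; (ii-b) Σ_{i=1}^M a^k_i = 0 for all k; (iii) φ_k(X_k) ⊆ [−ε^{1/M}, ε^{1/M}]^M for all k ∈ 𝒦. -/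
/-- The set `H₊`: points of `H` with all coordinates non-zero, where
`H = {x ∈ ℝ^M : ∏ |x_i| < ε, |x_i| ≤ T}`. -/
def setHplus (M : ℕ) (ε T : ℝ) : Set (Fin M → ℝ) :=
  {x | (∏ i, |x i|) < ε ∧ (∀ i, |x i| ≤ T) ∧ ∀ i, x i ≠ 0}

/-!
Put `δ = ε ^ (1 / M)`, `L = log (T / δ)` and, for `x ∈ H₊`, `y i = log (|x i| / δ)`. Then
`∑ i, y i ≤ 0` and `y i ≤ L`, so the integer vector `⌊y⌋` has non-positive sum and entries at most
`⌊L⌋`. Raising its entries without exceeding `⌊L⌋` gives an integer vector `n` with sum zero,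
entries at most `⌊L⌋` and `y i < n i + 1`, which says that scaling by `exp (-n i - 1)` moves `x`
into the cube of half-side `δ`. The pieces are the sets of points sharing the same `n`. Sum zero and
the upper bound confine the entries of `n` to an interval of length `M * ⌊L⌋`, and all but one of
them determine `n`. Since `1 ≤ L`, the number of pieces is therefore at most
`(M * ⌊L⌋ + 1) ^ (M - 1) ≤ ((M + 1) * L) ^ (M - 1)`.
-/

section Partition

variable {α β : Type*}

theorem exists_partition_fin_ncard {A : Set α} {S : Set β} (hS : S.Finite) {r : α → β → Prop}
    (hr : ∀ x ∈ A, ∃ b ∈ S, r x b) :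
    ∃ (X : Fin S.ncard → Set α) (b : Fin S.ncard → β),
      Pairwise (Function.onFun Disjoint X) ∧ ⋃ k, X k = A ∧
        (∀ k, b k ∈ S) ∧ ∀ k, ∀ x ∈ X k, r x (b k) := by
  have : Finite S := hS
  let e : Fin S.ncard ≃ S := (Finite.equivFinOfCardEq (Nat.card_coe_set_eq S)).symm
  choose code hcode_mem hcode using hr
  refine ⟨fun k ↦ {x | ∃ hx : x ∈ A, code x hx = e k}, fun k ↦ e k, ?_, ?_, fun k ↦ (e k).2, ?_⟩
  · refine fun k l hkl ↦ Set.disjoint_left.2 ?_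
    rintro x ⟨hx, hk⟩ ⟨_, hl⟩
    exact hkl (e.injective (Subtype.ext (hk.symm.trans hl)))
  · ext x
    simp only [Set.mem_iUnion, Set.mem_ofPred_eq]
    refine ⟨fun ⟨_, hx, _⟩ ↦ hx, fun hx ↦ ?_⟩
    obtain ⟨k, hk⟩ := e.surjective ⟨code x hx, hcode_mem x hx⟩
    exact ⟨k, hx, by rw [hk]⟩
  · rintro k x ⟨hx, hk⟩
    simpa only [hk] using hcode x hx

end Partition

open scoped Pointwise in
theorem sum_Icc_eq_Icc_sum {ι α : Type*} [AddCommGroup α] [LinearOrder α] [IsOrderedAddMonoid α]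
    (s : Finset ι) {f g : ι → α} (hfg : ∀ i ∈ s, f i ≤ g i) :
    ∑ i ∈ s, Set.Icc (f i) (g i) = Set.Icc (∑ i ∈ s, f i) (∑ i ∈ s, g i) := by
  induction s using Finset.cons_induction with
  | empty => simp only [Finset.sum_empty, Set.Icc_self, Set.singleton_zero]
  | cons i s hi ih =>
    rw [Finset.forall_mem_cons] at hfg
    simp only [Finset.sum_cons]
    rw [ih hfg.2, Set.Icc_add_Icc hfg.1 (Finset.sum_le_sum hfg.2)]

section ZeroSum

variable {ι : Type*} [Fintype ι]

theorem injOn_restrict_ne_of_sum_eq {α : Type*} [AddCancelCommMonoid α] (i₀ : ι) (a : α) :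
    Set.InjOn (fun (f : ι → α) (i : {i // i ≠ i₀}) ↦ f i) {f | ∑ i, f i = a} := by
  classical
  intro f hf g hg hfg
  have hne : ∀ i ≠ i₀, f i = g i := fun i hi ↦ congrFun hfg ⟨i, hi⟩
  have heq : f i₀ = g i₀ := by
    have hsum : ∑ i, f i = ∑ i, g i := hf.trans hg.symm
    rw [Fintype.sum_eq_add_sum_compl i₀, Fintype.sum_eq_add_sum_compl i₀ g,
      Finset.sum_congr rfl fun i hi ↦ hne i
        (Finset.mem_compl.1 hi ∘ Finset.mem_singleton.2)] at hsum
    exact add_right_cancel hsum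
  funext i
  rcases eq_or_ne i i₀ with rfl | hi
  exacts [heq, hne i hi]

variable (ι) in
/-- The integer vectors with coordinate sum zero and all coordinates at most `N`. They index the
pieces of the partition. -/
def zeroSumLE (N : ℕ) : Set (ι → ℤ) :=
  {n | ∑ i, n i = 0 ∧ ∀ i, n i ≤ N}

theorem neg_card_sub_one_mul_le_of_mem_zeroSumLE {N : ℕ} {n : ι → ℤ} (hn : n ∈ zeroSumLE ι N)
    (i : ι) : -((Fintype.card ι - 1) * N : ℤ) ≤ n i := by
  classical
  have hsplit : n i + ∑ j ∈ Finset.univ.erase i, n j = 0 := by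
    rw [Finset.add_sum_erase _ _ (Finset.mem_univ i), hn.1]
  have hrest : ∑ j ∈ Finset.univ.erase i, n j ≤ (Finset.univ.erase i).card • (N : ℤ) :=
    Finset.sum_le_card_nsmul _ _ _ fun j _ ↦ hn.2 j
  have hcard : ((Finset.univ.erase i).card : ℤ) = Fintype.card ι - 1 := by
    rw [Finset.cast_card_erase_of_mem (Finset.mem_univ i), Finset.card_univ]
  rw [nsmul_eq_mul, hcard] at hrest
  linarith

theorem finite_zeroSumLE (N : ℕ) : (zeroSumLE ι N).Finite := by
  classical
  exact (Set.finite_Icc (fun _ ↦ -((Fintype.card ι - 1) * N : ℤ)) (fun _ ↦ (N : ℤ))).subset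
    fun _ hn ↦ ⟨neg_card_sub_one_mul_le_of_mem_zeroSumLE hn, hn.2⟩

theorem ncard_zeroSumLE_le [Nonempty ι] (N : ℕ) :
    (zeroSumLE ι N).ncard ≤ (Fintype.card ι * N + 1) ^ (Fintype.card ι - 1) := by
  classical
  obtain ⟨i₀⟩ := ‹Nonempty ι›
  let box : Finset ({i // i ≠ i₀} → ℤ) :=
    Fintype.piFinset fun _ ↦ Finset.Icc (-((Fintype.card ι - 1) * N : ℤ)) N
  have hmaps : ∀ n ∈ zeroSumLE ι N, (fun i : {i // i ≠ i₀} ↦ n i) ∈ (box : Set _) := fun n hn ↦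
    Fintype.mem_piFinset.2 fun i ↦
      Finset.mem_Icc.2 ⟨neg_card_sub_one_mul_le_of_mem_zeroSumLE hn i, hn.2 i⟩
  have hside : (Finset.Icc (-((Fintype.card ι - 1) * N : ℤ)) N).card = Fintype.card ι * N + 1 := by
    rw [Int.card_Icc, ← Int.toNat_natCast (Fintype.card ι * N + 1)]
    congr 1
    push_cast
    ring
  calc (zeroSumLE ι N).ncard ≤ (box : Set _).ncard :=
        Set.ncard_le_ncard_of_injOn _ hmaps
          ((injOn_restrict_ne_of_sum_eq i₀ 0).mono fun _ hn ↦ hn.1) box.finite_toSet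
    _ = (Fintype.card ι * N + 1) ^ (Fintype.card ι - 1) := by
        rw [Set.ncard_coe_finset, Fintype.card_piFinset, Finset.prod_const, hside,
          Finset.card_univ, Fintype.card_subtype_compl, Fintype.card_subtype_eq]

theorem ncard_zeroSumLE_floor_le [Nonempty ι] {L : ℝ} (hL : 1 ≤ L) :
    ((zeroSumLE ι ⌊L⌋₊).ncard : ℝ) ≤
      (Fintype.card ι + 1 : ℝ) ^ (Fintype.card ι - 1) * L ^ (Fintype.card ι - 1) := by
  have hfloor : (⌊L⌋₊ : ℝ) ≤ L := Nat.floor_le (by linarith)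
  calc ((zeroSumLE ι ⌊L⌋₊).ncard : ℝ)
      ≤ (Fintype.card ι * ⌊L⌋₊ + 1 : ℝ) ^ (Fintype.card ι - 1) := by
        exact_mod_cast ncard_zeroSumLE_le ⌊L⌋₊
    _ ≤ (Fintype.card ι * L + L) ^ (Fintype.card ι - 1) := by gcongr
    _ = (Fintype.card ι + 1 : ℝ) ^ (Fintype.card ι - 1) * L ^ (Fintype.card ι - 1) := by
        rw [← mul_pow, add_one_mul]

theorem exists_mem_zeroSumLE_lt_add_one {R : Type*} [Ring R] [LinearOrder R]
    [IsStrictOrderedRing R] [FloorRing R] {y : ι → R} {N : ℕ} (hsum : ∑ i, y i ≤ 0)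
    (hy : ∀ i, y i < N + 1) : ∃ n ∈ zeroSumLE ι N, ∀ i, y i < n i + 1 := by
  have hfloor : ∀ i, ⌊y i⌋ ≤ (N : ℤ) := fun i ↦
    Int.lt_add_one_iff.1 (Int.floor_lt.2 (by exact_mod_cast hy i))
  have hfloor_sum : ∑ i, ⌊y i⌋ ≤ 0 := by
    have : ∑ i, (⌊y i⌋ : R) ≤ 0 := (Finset.sum_le_sum fun i _ ↦ Int.floor_le (y i)).trans hsum
    exact_mod_cast this
  have hzero : (0 : ℤ) ∈ Set.Icc (∑ i, ⌊y i⌋) (∑ _i : ι, (N : ℤ)) :=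
    ⟨hfloor_sum, Finset.sum_nonneg fun _ _ ↦ N.cast_nonneg⟩
  rw [← sum_Icc_eq_Icc_sum _ fun i _ ↦ hfloor i, Set.mem_fintype_sum] at hzero
  obtain ⟨n, hn, hn_sum⟩ := hzero
  refine ⟨n, ⟨hn_sum, fun i ↦ (hn i).2⟩, fun i ↦ (Int.lt_floor_add_one (y i)).trans_le ?_⟩
  gcongr
  exact_mod_cast (hn i).1

theorem exists_mem_zeroSumLE_lt_mul_exp {δ T : ℝ} (hδ : 0 < δ) {x : ι → ℝ} (hx : ∀ i, 0 < x i)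
    (hprod : ∏ i, x i ≤ δ ^ Fintype.card ι) (hxT : ∀ i, x i ≤ T) :
    ∃ n ∈ zeroSumLE ι ⌊Real.log (T / δ)⌋₊, ∀ i, x i < δ * Real.exp (n i + 1) := by
  have hxδ : ∀ i, 0 < x i / δ := fun i ↦ div_pos (hx i) hδ
  have hsum : ∑ i, Real.log (x i / δ) ≤ 0 := by
    rw [← Real.log_prod fun i _ ↦ (hxδ i).ne', Finset.prod_div_distrib, Finset.prod_const,
      Finset.card_univ]
    exact Real.log_nonpos (div_nonneg (Finset.prod_nonneg fun i _ ↦ (hx i).le) (by positivity))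
      (div_le_one_of_le₀ hprod (by positivity))
  have hlog : ∀ i, Real.log (x i / δ) < ⌊Real.log (T / δ)⌋₊ + 1 := fun i ↦
    (Real.log_le_log (hxδ i) (by gcongr; exact hxT i)).trans_lt (Nat.lt_floor_add_one _)
  obtain ⟨n, hn, hlt⟩ := exists_mem_zeroSumLE_lt_add_one hsum hlog
  refine ⟨n, hn, fun i ↦ ?_⟩
  rw [← div_lt_iff₀' hδ, ← Real.log_lt_iff_lt_exp (hxδ i)]
  exact hlt i

theorem inv_le_exp_neg_of_mem_zeroSumLE_floor_log {t : ℝ} (ht : 1 ≤ t) {n : ι → ℤ}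
    (hn : n ∈ zeroSumLE ι ⌊Real.log t⌋₊) (i : ι) : t⁻¹ ≤ Real.exp (-n i) := by
  have hn_le : (n i : ℝ) ≤ Real.log t :=
    calc (n i : ℝ) ≤ ⌊Real.log t⌋₊ := by exact_mod_cast hn.2 i
      _ ≤ Real.log t := Nat.floor_le (Real.log_nonneg ht)
  rw [← Real.exp_log (zero_lt_one.trans_le ht), ← Real.exp_neg]
  gcongr

end ZeroSum

theorem exp_one_lt_div_rpow_of_lt {M : ℕ} (hM : M ≠ 0) {ε T : ℝ} (hε : 0 < ε) (hT : 0 ≤ T)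
    (h : Real.exp 1 ^ M < T ^ M / ε) : Real.exp 1 < T / ε ^ ((1 : ℝ) / M) := by
  refine lt_of_pow_lt_pow_left₀ M (by positivity) ?_
  rwa [div_pow, one_div, Real.rpow_inv_natCast_pow hε.le hM]

theorem exists_mem_zeroSumLE_abs_exp_mul_le {M : ℕ} (hM : M ≠ 0) {ε T : ℝ} (hε : 0 < ε)
    {x : Fin M → ℝ} (hx : x ∈ setHplus M ε T) :
    ∃ n ∈ zeroSumLE (Fin M) ⌊Real.log (T / ε ^ ((1 : ℝ) / M))⌋₊,
      ∀ i, |Real.exp (-n i - 1) * x i| ≤ ε ^ ((1 : ℝ) / M) := by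
  obtain ⟨hprod, hxT, hx_ne⟩ := hx
  have hpow : (ε ^ ((1 : ℝ) / M)) ^ Fintype.card (Fin M) = ε := by
    rw [Fintype.card_fin, one_div, Real.rpow_inv_natCast_pow hε.le hM]
  obtain ⟨n, hn, hlt⟩ := exists_mem_zeroSumLE_lt_mul_exp (Real.rpow_pos_of_pos hε _)
    (fun i ↦ abs_pos.2 (hx_ne i)) (hprod.le.trans_eq hpow.symm) hxT
  refine ⟨n, hn, fun i ↦ ?_⟩
  rw [abs_mul, Real.abs_exp, ← neg_add', Real.exp_neg, inv_mul_le_iff₀' (Real.exp_pos _)]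
  exact (hlt i).le

theorem stmt3 (M : ℕ) (hM : 0 < M) :
    ∃ c c₁ c₂ : ℝ, 0 < c₁ ∧ 0 < c₂ ∧
      ∀ ε T : ℝ, 0 < ε → 0 < T → Real.exp 1 ^ M < T ^ M / ε →
        ∃ (K : ℕ) (X : Fin K → Set (Fin M → ℝ)) (a : Fin K → Fin M → ℝ),
          -- `X k` is a partition of `H₊`
          (∀ k l : Fin K, k ≠ l → Disjoint (X k) (X l)) ∧
          (⋃ k, X k) = setHplus M ε T ∧
          -- (i) bound on the number of pieces
          (K : ℝ) ≤ c₁ * Real.log (T / ε ^ ((1 : ℝ) / (M : ℝ))) ^ (M - 1) ∧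
          -- (ii-a) lower bound on the scaling factors
          (∀ k i, c₂ * ε ^ ((1 : ℝ) / (M : ℝ)) / T ≤ Real.exp (a k i - c)) ∧
          -- (ii-b) the maps `φ_k` are unimodular
          (∀ k, ∑ i, a k i = 0) ∧
          -- (iii) `φ_k(X_k) ⊆ [-ε^(1/M), ε^(1/M)]^M`
          (∀ k, ∀ x ∈ X k, ∀ i, |Real.exp (a k i - c) * x i| ≤ ε ^ ((1 : ℝ) / (M : ℝ))) := by
  have : Nonempty (Fin M) := ⟨⟨0, hM⟩⟩
  refine ⟨1, (M + 1) ^ (M - 1), Real.exp (-1), by positivity, by positivity, ?_⟩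
  intro ε T hε hT hεT
  set δ := ε ^ ((1 : ℝ) / (M : ℝ))
  have hexp : Real.exp 1 < T / δ := exp_one_lt_div_rpow_of_lt hM.ne' hε hT.le hεT
  have hone : 1 ≤ T / δ := (Real.one_le_exp zero_le_one).trans hexp.le
  have hlog : 1 ≤ Real.log (T / δ) := (Real.le_log_iff_exp_le (by positivity)).2 hexp.le
  obtain ⟨X, n, hdisjoint, hunion, hn, hcube⟩ :=
    exists_partition_fin_ncard (finite_zeroSumLE ⌊Real.log (T / δ)⌋₊)
      fun x ↦ exists_mem_zeroSumLE_abs_exp_mul_le hM.ne' hε (T := T) (x := x)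
  refine ⟨_, X, fun k i ↦ -n k i, fun k l hkl ↦ hdisjoint hkl, hunion, ?_, fun k i ↦ ?_,
    fun k ↦ ?_, hcube⟩
  · simpa only [Fintype.card_fin] using ncard_zeroSumLE_floor_le (ι := Fin M) hlog
  · rw [mul_div_assoc, ← inv_div T, sub_eq_neg_add, Real.exp_add]
    gcongr
    exact inv_le_exp_neg_of_mem_zeroSumLE_floor_log hone (hn k) i
  · rw [Finset.sum_neg_distrib, neg_eq_zero]
    exact_mod_cast (hn k).1
end
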